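/- Hamilton–Jacobi theorem, parabolic case: the renormalized value function v is a viscosity solution on Ω of the Hamilton–Jacobi equation ½‖∇v‖_M² − U = 0; that is, for every x ∈ Ω, one has ½‖p‖_M² − U(x) ≤ 0 for all p ∈ D⁺v(x) and ½‖p‖_M² − U(x) ≥ 0 for all p ∈ D⁻v(x). -/

import Mathlib

open MeasureTheory Real Set Filter Topology
open scoped RealInnerProductSpace ENNReal

noncomputable section
namespace NBodyHJ

attribute [local instance] Classical.propDecidable

abbrev Conf (d N : ℕ) := Fin N → EuclideanSpace ℝ (Fin d)

variable {d N : ℕ}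

/-- The mass inner product on the configuration space. -/
def minner (m : Fin N → ℝ) (x y : Conf d N) : ℝ := ∑ i, m i * ⟪x i, y i⟫

/-- The mass norm on the configuration space. -/
def mnorm (m : Fin N → ℝ) (x : Conf d N) : ℝ := Real.sqrt (minner m x x)

/-- Membership in the zero-barycenter configuration space `X`. -/
def inX (m : Fin N → ℝ) (x : Conf d N) : Prop := ∑ i, m i • x i = 0

/-- Collision configurations. -/
def collision (x : Conf d N) : Prop := ∃ i j, i ≠ j ∧ x i = x j

/-- Membership in the collision-free zero-barycenter space `Ω`. -/
def inOmega (m : Fin N → ℝ) (x : Conf d N) : Prop := inX m x ∧ ¬ collision x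

/-- The Newtonian potential (with junk value `0` for a colliding pair). -/
def U (m : Fin N → ℝ) (x : Conf d N) : ℝ :=
  ∑ i : Fin N, ∑ j : Fin N, if i < j then m i * m j / ‖x i - x j‖ else 0

/-- The time interval `(t₀, T)`, where `T ∈ (t₀, +∞]` is extended-real. -/
def timeSet (t0 : ℝ) (T : EReal) : Set ℝ := {t : ℝ | t0 < t ∧ (t : EReal) < T}

/-- Membership of the pair (curve, derivative) `(φ, φ')` in `D₀^{1,2}(t₀, T)`:
`φ` starts at `0`, takes values in `X`, is the integral of `φ'` (hence locally
absolutely continuous), and `φ'` has finite `L²` mass norm on `(t₀, T)`. -/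
def InD (m : Fin N → ℝ) (t0 : ℝ) (T : EReal) (φ φ' : ℝ → Conf d N) : Prop :=
  φ t0 = 0 ∧
  (∀ t : ℝ, t0 ≤ t → (t : EReal) < T → inX m (φ t)) ∧
  (∀ t : ℝ, t0 ≤ t → (t : EReal) < T → φ t = ∫ s in Set.Ioc t0 t, φ' s) ∧
  (∀ t : ℝ, t0 ≤ t → (t : EReal) < T → IntegrableOn φ' (Set.Ioc t0 t)) ∧
  IntegrableOn (fun t => (mnorm m (φ' t)) ^ 2) (timeSet t0 T)

/-- The norm `‖φ‖_{D_T}`. -/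
def Dnorm (m : Fin N → ℝ) (t0 : ℝ) (T : EReal) (φ' : ℝ → Conf d N) : ℝ :=
  Real.sqrt (∫ t in timeSet t0 T, (mnorm m (φ' t)) ^ 2)

/-- The motion `γ(t) = φ(t) + t a + x - a` associated with `φ` in the hyperbolic case. -/
def hypCurve (a x : Conf d N) (φ : ℝ → Conf d N) (t : ℝ) : Conf d N :=
  φ t + t • a + x - a

/-- The integrand of the hyperbolic renormalized Lagrangian action. -/
def hypIntegrand (m : Fin N → ℝ) (a x : Conf d N) (φ φ' : ℝ → Conf d N) (t : ℝ) : ℝ :=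
  (mnorm m (φ' t)) ^ 2 / 2 + U m (hypCurve a x φ t) - U m (t • a)

/-- The hyperbolic renormalized Lagrangian action `A_{x,[1,T]}(φ)`, with values in
`ℝ ∪ {+∞}` : it equals the integral of the renormalized Lagrangian if this integrand is
integrable and the motion is a.e. collision-free, and `+∞` otherwise. -/
def hypAction (m : Fin N → ℝ) (a x : Conf d N) (T : EReal) (φ φ' : ℝ → Conf d N) : EReal :=
  if IntegrableOn (hypIntegrand m a x φ φ') (timeSet 1 T) ∧
      (∀ᵐ t ∂volume.restrict (timeSet 1 T), ¬ collision (hypCurve a x φ t))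
  then ((∫ t in timeSet 1 T, hypIntegrand m a x φ φ' t : ℝ) : EReal)
  else (⊤ : EReal)

/-- The infimum of the hyperbolic renormalized action over `D₀^{1,2}(1,T)`. -/
def hypInf (m : Fin N → ℝ) (a x : Conf d N) (T : EReal) : EReal :=
  ⨅ (φ : ℝ → Conf d N) (φ' : ℝ → Conf d N) (_ : InD m 1 T φ φ'), hypAction m a x T φ φ'

/-- The renormalized value function `v(x)` in the hyperbolic case. -/
def hypValue (m : Fin N → ℝ) (a x : Conf d N) : ℝ :=
  (hypInf m a x ⊤).toReal - minner m a x


/-- `bm` is a normalized minimal central configuration : it lies in `X`, is collision-free,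
has unit mass norm, and minimizes the Newtonian potential over the inertia ellipsoid
`E = {x ∈ X : ⟨x,x⟩_M = 1}` (whence it is a critical point of `U` restricted to `E`). -/
def IsMinCentral (m : Fin N → ℝ) (bm : Conf d N) : Prop :=
  inX m bm ∧ ¬ collision bm ∧ minner m bm bm = 1 ∧
    ∀ y : Conf d N, inX m y → ¬ collision y → minner m y y = 1 → U m bm ≤ U m y

/-- `β = (9 U(b_m)/2)^{1/3}`. -/
def beta (m : Fin N → ℝ) (bm : Conf d N) : ℝ := (9 * U m bm / 2) ^ ((1:ℝ)/3)

/-- The parabolic reference path `r₀(t) = β b_m t^{2/3}`. -/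
def parR0 (m : Fin N → ℝ) (bm : Conf d N) (t : ℝ) : Conf d N :=
  (beta m bm * t ^ ((2:ℝ)/3)) • bm

/-- The second derivative `r̈₀(t) = −(2/9) β b_m t^{−4/3}` of the parabolic reference path. -/
def parR0'' (m : Fin N → ℝ) (bm : Conf d N) (t : ℝ) : Conf d N :=
  (beta m bm * (-(2:ℝ)/9) * t ^ (-(4:ℝ)/3)) • bm

/-- The motion `γ(t) = φ(t) + r₀(t) + x − β b_m` associated with `φ` in the parabolic case. -/
def parCurve (m : Fin N → ℝ) (bm x : Conf d N) (φ : ℝ → Conf d N) (t : ℝ) : Conf d N :=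
  φ t + parR0 m bm t + x - beta m bm • bm

/-- The integrand of the parabolic renormalized Lagrangian action. -/
def parIntegrand (m : Fin N → ℝ) (bm x : Conf d N) (φ φ' : ℝ → Conf d N) (t : ℝ) : ℝ :=
  (mnorm m (φ' t)) ^ 2 / 2 + U m (parCurve m bm x φ t) - U m (parR0 m bm t)
    - minner m (parR0'' m bm t) (φ t)

/-- The parabolic renormalized Lagrangian action `A_{x,[1,T]}(φ)`, with values in
`ℝ ∪ {+∞}` : it equals the integral of the renormalized Lagrangian if this integrand is
integrable and the motion is a.e. collision-free, and `+∞` otherwise. -/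
def parAction (m : Fin N → ℝ) (bm x : Conf d N) (T : EReal) (φ φ' : ℝ → Conf d N) : EReal :=
  if IntegrableOn (parIntegrand m bm x φ φ') (timeSet 1 T) ∧
      (∀ᵐ t ∂volume.restrict (timeSet 1 T), ¬ collision (parCurve m bm x φ t))
  then ((∫ t in timeSet 1 T, parIntegrand m bm x φ φ' t : ℝ) : EReal)
  else (⊤ : EReal)

/-- The infimum of the parabolic renormalized action over `D₀^{1,2}(1,T)`. -/
def parInf (m : Fin N → ℝ) (bm x : Conf d N) (T : EReal) : EReal :=
  ⨅ (φ : ℝ → Conf d N) (φ' : ℝ → Conf d N) (_ : InD m 1 T φ φ'), parAction m bm x T φ φ'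

/-- The renormalized value function `v(x)` in the parabolic case. -/
def parValue (m : Fin N → ℝ) (bm x : Conf d N) : ℝ := (parInf m bm x ⊤).toReal

/-- The zero-barycenter configuration space `X`, as a set. -/
def setX (m : Fin N → ℝ) : Set (Conf d N) := {x | inX m x}

/-- `p ∈ D⁻v(x)` : the Fréchet subdifferential of `v` at `x`, computed within `X` and with
respect to the mass inner product; the condition states
`liminf_{y → x} (v(y) − v(x) − ⟨p, y − x⟩_M)/‖y − x‖_M ≥ 0`. -/
def InSubdiff (m : Fin N → ℝ) (v : Conf d N → ℝ) (x p : Conf d N) : Prop :=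
  ∀ ε > (0:ℝ), ∀ᶠ y in nhdsWithin x (setX m \ {x}),
    -(ε * mnorm m (y - x)) ≤ v y - v x - minner m p (y - x)

/-- `p ∈ D⁺v(x)` : the Fréchet superdifferential of `v` at `x`, computed within `X` and with
respect to the mass inner product; the condition states
`limsup_{y → x} (v(y) − v(x) − ⟨p, y − x⟩_M)/‖y − x‖_M ≤ 0`. -/
def InSuperdiff (m : Fin N → ℝ) (v : Conf d N → ℝ) (x p : Conf d N) : Prop :=
  ∀ ε > (0:ℝ), ∀ᶠ y in nhdsWithin x (setX m \ {x}),
    v y - v x - minner m p (y - x) ≤ ε * mnorm m (y - x)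

/-!
Write `A(γ)` for the renormalized action of a motion `γ`, `b` for the minimal central configuration
and `r` for the radius of the reference motion. Cutting `γ` at time `1 + h` and restarting the clock
gives the dynamic programming identity `A(γ) = ∫_1^{1+h} (½‖γ'‖² + U(γ)) dt + A(γ(· + h))`: the
renormalized Lagrangian differs from the Newtonian one by the exact derivative of
`r' (⟨b, γ - r b⟩ + 2 r)`, up to constants, and the boundary terms of `γ` and of its time shift
cancel at infinity because `t^{2/3}` and its shift differ by `O(t^{-1/3})`. Hence `v(x) - v(y)` is
at most the Newtonian action of any arc from `x` to `y`, with almost equality along near-minimizers.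

Testing this domination on the segments from `x` to `x - s p` gives the inequality for
superdifferentials. For subdifferentials, minimality of `b` gives the Kepler bound
`U(y) ≥ U(b) / ‖y‖`, and with Hardy's inequality the renormalized action is coercive; so
near-minimizers stay close to `x` for short times, and comparing `½‖γ'‖² + U(x)` with the slope of
`v` along them gives the opposite inequality.
-/

/-! ### Primitives -/

section Primitive

variable {E F : Type*} [NormedAddCommGroup E] [NormedSpace ℝ E]
  [NormedAddCommGroup F] [NormedSpace ℝ F]

/-- On `[a, b]` the curve `f` is a primitive of the integrable curve `f'`. Equivalently `f` is
absolutely continuous with a.e. derivative `f'`, but this form leaves `f'` arbitrary on null sets,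
as in `InD`. -/
structure IsPrimitiveOn (f f' : ℝ → E) (a b : ℝ) : Prop where
  le : a ≤ b
  intervalIntegrable : IntervalIntegrable f' volume a b
  eq_add_integral : ∀ t ∈ Icc a b, f t = f a + ∫ s in a..t, f' s

namespace IsPrimitiveOn

variable {f f' g g' : ℝ → E} {a b c : ℝ}

theorem intervalIntegrable_of_mem (hf : IsPrimitiveOn f f' a b) {t : ℝ} (ht : t ∈ Icc a b) :
    IntervalIntegrable f' volume a t :=
  hf.intervalIntegrable.mono_set <| by
    rw [uIcc_of_le ht.1, uIcc_of_le hf.le]; exact Icc_subset_Icc_right ht.2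

theorem integral_eq_sub (hf : IsPrimitiveOn f f' a b) : ∫ s in a..b, f' s = f b - f a := by
  rw [hf.eq_add_integral b (right_mem_Icc.2 hf.le), add_sub_cancel_left]

theorem continuousOn (hf : IsPrimitiveOn f f' a b) : ContinuousOn f (Icc a b) := by
  have h := intervalIntegral.continuousOn_primitive_interval' hf.intervalIntegrable left_mem_uIcc
  rw [uIcc_of_le hf.le] at h
  exact (continuousOn_const.add h).congr hf.eq_add_integral

theorem const (e : E) (hab : a ≤ b) : IsPrimitiveOn (fun _ => e) (fun _ => 0) a b :=
  ⟨hab, intervalIntegrable_const, fun t _ => by simp⟩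

theorem add (hf : IsPrimitiveOn f f' a b) (hg : IsPrimitiveOn g g' a b) :
    IsPrimitiveOn (fun t => f t + g t) (fun t => f' t + g' t) a b where
  le := hf.le
  intervalIntegrable := hf.intervalIntegrable.add hg.intervalIntegrable
  eq_add_integral t ht := by
    rw [intervalIntegral.integral_add (hf.intervalIntegrable_of_mem ht)
      (hg.intervalIntegrable_of_mem ht), hf.eq_add_integral t ht, hg.eq_add_integral t ht]
    abel

theorem sum {ι : Type*} (s : Finset ι) {f f' : ι → ℝ → E} (hab : a ≤ b)
    (h : ∀ i ∈ s, IsPrimitiveOn (f i) (f' i) a b) :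
    IsPrimitiveOn (fun t => ∑ i ∈ s, f i t) (fun t => ∑ i ∈ s, f' i t) a b := by
  induction s using Finset.induction_on with
  | empty => simpa using const (0 : E) hab
  | insert i s hi ih =>
    simp only [Finset.sum_insert hi]
    exact (h i (Finset.mem_insert_self i s)).add
      (ih fun j hj => h j (Finset.mem_insert_of_mem hj))

theorem clm_apply (hf : IsPrimitiveOn f f' a b) (L : E →L[ℝ] F) [CompleteSpace E]
    [CompleteSpace F] : IsPrimitiveOn (fun t => L (f t)) (fun t => L (f' t)) a b where
  le := hf.le
  intervalIntegrable :=
    ⟨L.integrable_comp hf.intervalIntegrable.1, L.integrable_comp hf.intervalIntegrable.2⟩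
  eq_add_integral t ht := by
    rw [hf.eq_add_integral t ht, map_add,
      L.intervalIntegral_comp_comm (hf.intervalIntegrable_of_mem ht)]

theorem sub (hf : IsPrimitiveOn f f' a b) (hg : IsPrimitiveOn g g' a b) :
    IsPrimitiveOn (fun t => f t - g t) (fun t => f' t - g' t) a b where
  le := hf.le
  intervalIntegrable := hf.intervalIntegrable.sub hg.intervalIntegrable
  eq_add_integral t ht := by
    rw [intervalIntegral.integral_sub (hf.intervalIntegrable_of_mem ht)
      (hg.intervalIntegrable_of_mem ht), hf.eq_add_integral t ht, hg.eq_add_integral t ht]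
    abel

theorem sub_const (hf : IsPrimitiveOn f f' a b) (e : E) :
    IsPrimitiveOn (fun t => f t - e) f' a b where
  le := hf.le
  intervalIntegrable := hf.intervalIntegrable
  eq_add_integral t ht := by rw [hf.eq_add_integral t ht, add_sub_right_comm]

theorem congr (hf : IsPrimitiveOn f f' a b) (h : EqOn g f (Icc a b)) (h' : EqOn g' f' (Ioc a b)) :
    IsPrimitiveOn g g' a b := by
  have hae : ∀ t ∈ Icc a b, EqOn g' f' (uIoc a t) := fun t ht => by
    rw [uIoc_of_le ht.1]
    exact h'.mono (Ioc_subset_Ioc_right ht.2)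
  refine ⟨hf.le, hf.intervalIntegrable.congr (hae b (right_mem_Icc.2 hf.le)).symm,
    fun t ht => ?_⟩
  rw [h ht, h (left_mem_Icc.2 hf.le), hf.eq_add_integral t ht,
    intervalIntegral.integral_congr_ae (Eventually.of_forall fun s hs => hae t ht hs)]

theorem of_hasDerivAt_Ioo [CompleteSpace E] (hab : a ≤ b) (hc : ContinuousOn f (Icc a b))
    (hf : ∀ t ∈ Ioo a b, HasDerivAt f (f' t) t) (hi : IntervalIntegrable f' volume a b) :
    IsPrimitiveOn f f' a b where
  le := hab
  intervalIntegrable := hi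
  eq_add_integral t ht := by
    rw [intervalIntegral.integral_eq_sub_of_hasDerivAt_of_le ht.1
      (hc.mono (Icc_subset_Icc_right ht.2)) (fun s hs => hf s ⟨hs.1, hs.2.trans_le ht.2⟩)
      (hi.mono_set (by
        rw [uIcc_of_le hab, uIcc_of_le ht.1]; exact Icc_subset_Icc_right ht.2))]
    abel

theorem of_hasDerivAt [CompleteSpace E] (hab : a ≤ b) (hf : ∀ t ∈ Icc a b, HasDerivAt f (f' t) t)
    (hc : ContinuousOn f' (Icc a b)) : IsPrimitiveOn f f' a b :=
  of_hasDerivAt_Ioo hab (fun t ht => (hf t ht).continuousAt.continuousWithinAt)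
    (fun t ht => hf t (Ioo_subset_Icc_self ht)) (hc.intervalIntegrable_of_Icc hab)

theorem mono (hf : IsPrimitiveOn f f' a b) {a' b' : ℝ} (ha : a ≤ a') (hab : a' ≤ b')
    (hb : b' ≤ b) : IsPrimitiveOn f f' a' b' := by
  have ha' : a' ∈ Icc a b := ⟨ha, hab.trans hb⟩
  have hint : ∀ t ∈ Icc a b, IntervalIntegrable f' volume a' t := fun t ht =>
    (hf.intervalIntegrable_of_mem ha').symm.trans (hf.intervalIntegrable_of_mem ht)
  refine ⟨hab, hint b' ⟨ha.trans hab, hb⟩, fun t ht => ?_⟩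
  have ht' : t ∈ Icc a b := ⟨ha.trans ht.1, ht.2.trans hb⟩
  rw [hf.eq_add_integral t ht', hf.eq_add_integral a' ha', add_assoc,
    intervalIntegral.integral_add_adjacent_intervals (hf.intervalIntegrable_of_mem ha')
      (hint t ht')]

theorem trans (hf : IsPrimitiveOn f f' a b) (hg : IsPrimitiveOn f f' b c) :
    IsPrimitiveOn f f' a c := by
  refine ⟨hf.le.trans hg.le, hf.intervalIntegrable.trans hg.intervalIntegrable, fun t ht => ?_⟩
  rcases le_total t b with htb | htb
  · exact hf.eq_add_integral t ⟨ht.1, htb⟩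
  · rw [hg.eq_add_integral t ⟨htb, ht.2⟩, hf.eq_add_integral b (right_mem_Icc.2 hf.le),
      add_assoc, intervalIntegral.integral_add_adjacent_intervals hf.intervalIntegrable
        (hg.intervalIntegrable_of_mem ⟨htb, ht.2⟩)]

theorem comp_add_right (hf : IsPrimitiveOn f f' a b) (h : ℝ) :
    IsPrimitiveOn (fun t => f (t + h)) (fun t => f' (t + h)) (a - h) (b - h) where
  le := sub_le_sub_right hf.le h
  intervalIntegrable := hf.intervalIntegrable.comp_add_right h
  eq_add_integral t ht := by
    rw [intervalIntegral.integral_comp_add_right, sub_add_cancel]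
    exact hf.eq_add_integral (t + h) ⟨sub_le_iff_le_add.1 ht.1, le_sub_iff_add_le.1 ht.2⟩

theorem comp_sub_left (hf : IsPrimitiveOn f f' a b) (h : ℝ) :
    IsPrimitiveOn (fun t => f (h - t)) (fun t => -f' (h - t)) (h - b) (h - a) where
  le := sub_le_sub_left hf.le h
  intervalIntegrable := (hf.intervalIntegrable.comp_sub_left h).symm.neg
  eq_add_integral t ht := by
    have hb : h - t ≤ b := by linarith [ht.1]
    have h1 := (hf.mono (le_sub_comm.1 ht.2) hb le_rfl).integral_eq_sub
    rw [intervalIntegral.integral_neg, intervalIntegral.integral_comp_sub_left, sub_sub_cancel,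
      h1]
    abel

theorem mul {f f' g g' : ℝ → ℝ} (hf : IsPrimitiveOn f f' a b) (hg : IsPrimitiveOn g g' a b) :
    IsPrimitiveOn (fun t => f t * g t) (fun t => f' t * g t + f t * g' t) a b := by
  have hint : IntervalIntegrable (fun t => f' t * g t + f t * g' t) volume a b :=
    (hf.intervalIntegrable.mul_continuousOn (by rw [uIcc_of_le hf.le]; exact hg.continuousOn)).add
      (hg.intervalIntegrable.continuousOn_mul (by rw [uIcc_of_le hf.le]; exact hf.continuousOn))
  refine ⟨hf.le, hint, fun t ht => ?_⟩
  have hac : ∀ {k k' : ℝ → ℝ}, IsPrimitiveOn k k' a b →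
      AbsolutelyContinuousOnInterval (fun s => k a + ∫ r in a..s, k' r) a t := fun hk =>
    (LipschitzWith.const _).lipschitzOnWith.absolutelyContinuousOnInterval.fun_add
      ((hk.intervalIntegrable_of_mem ht).absolutelyContinuousOnInterval_intervalIntegral
        left_mem_uIcc)
  have hderiv : ∀ {k k' : ℝ → ℝ}, IsPrimitiveOn k k' a b → ∀ᵐ s, s ∈ uIoc a t →
      deriv (fun s => k a + ∫ r in a..s, k' r) s = k' s := fun hk => by
    filter_upwards [(hk.intervalIntegrable_of_mem ht).ae_hasDerivAt_integral] with s hs hst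
    exact ((hs (uIoc_subset_uIcc hst) a left_mem_uIcc).const_add _).deriv
  have hparts := (hac hf).integral_deriv_mul_eq_sub (hac hg)
  rw [← hf.eq_add_integral t ht, ← hg.eq_add_integral t ht] at hparts
  simp only [intervalIntegral.integral_same, add_zero] at hparts
  rw [← sub_eq_iff_eq_add', ← hparts]
  refine intervalIntegral.integral_congr_ae ?_
  filter_upwards [hderiv hf, hderiv hg] with s hfs hgs hs
  have hs' : s ∈ Icc a b := by
    rw [uIoc_of_le ht.1] at hs
    exact ⟨hs.1.le, hs.2.trans ht.2⟩
  rw [hfs hs, hgs hs, ← hf.eq_add_integral s hs', ← hg.eq_add_integral s hs']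

end IsPrimitiveOn

end Primitive

/-! ### The mass inner product -/

section MassInner

variable {m : Fin N → ℝ}

/-- The mass inner product as a continuous bilinear form. -/
def massForm (m : Fin N → ℝ) : Conf d N →L[ℝ] Conf d N →L[ℝ] ℝ :=
  ∑ i, m i • (innerSL ℝ).bilinearComp (ContinuousLinearMap.proj i) (ContinuousLinearMap.proj i)

theorem massForm_apply (x y : Conf d N) : massForm m x y = minner m x y := by
  simp [massForm, minner]

theorem minner_comm (x y : Conf d N) : minner m x y = minner m y x := by
  simp only [minner, real_inner_comm]

theorem minner_add_left (x y z : Conf d N) :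
    minner m (x + y) z = minner m x z + minner m y z := by
  simp only [← massForm_apply, map_add, add_apply]

theorem minner_add_right (x y z : Conf d N) :
    minner m x (y + z) = minner m x y + minner m x z := by
  simp only [← massForm_apply, map_add]

theorem minner_sub_left (x y z : Conf d N) :
    minner m (x - y) z = minner m x z - minner m y z := by
  simp only [← massForm_apply, map_sub, sub_apply]

theorem minner_sub_right (x y z : Conf d N) :
    minner m x (y - z) = minner m x y - minner m x z := by
  simp only [← massForm_apply, map_sub]

theorem minner_smul_left (c : ℝ) (x y : Conf d N) : minner m (c • x) y = c * minner m x y := by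
  simp only [← massForm_apply, map_smul, smul_apply, smul_eq_mul]

theorem minner_smul_right (c : ℝ) (x y : Conf d N) : minner m x (c • y) = c * minner m x y := by
  simp only [← massForm_apply, map_smul, smul_eq_mul]

theorem minner_neg_neg (x y : Conf d N) : minner m (-x) (-y) = minner m x y := by
  simp only [← massForm_apply, map_neg, neg_apply, neg_neg]

theorem minner_zero_right (x : Conf d N) : minner m x 0 = 0 := by
  rw [← massForm_apply, map_zero]

theorem minner_self_nonneg (hm : ∀ i, 0 < m i) (x : Conf d N) : 0 ≤ minner m x x :=
  Finset.sum_nonneg fun i _ => mul_nonneg (hm i).le real_inner_self_nonneg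

theorem mnorm_sq (hm : ∀ i, 0 < m i) (x : Conf d N) : mnorm m x ^ 2 = minner m x x :=
  Real.sq_sqrt (minner_self_nonneg hm x)

theorem mnorm_nonneg (x : Conf d N) : 0 ≤ mnorm m x := Real.sqrt_nonneg _

theorem mnorm_smul (c : ℝ) (x : Conf d N) : mnorm m (c • x) = |c| * mnorm m x := by
  rw [mnorm, minner_smul_left, minner_smul_right, ← mul_assoc, ← sq, Real.sqrt_mul (sq_nonneg c),
    Real.sqrt_sq_eq_abs, mnorm]

theorem abs_minner_le_mnorm_mul_mnorm (hm : ∀ i, 0 < m i) (x y : Conf d N) :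
    |minner m x y| ≤ mnorm m x * mnorm m y := by
  have h := LinearMap.BilinForm.apply_mul_apply_le_of_forall_zero_le
    (massForm m).toLinearMap₁₂
    (fun z => by simpa [massForm_apply] using minner_self_nonneg hm z) x y
  refine abs_le_of_sq_le_sq ?_ (mul_nonneg (mnorm_nonneg x) (mnorm_nonneg y))
  simpa [massForm_apply, minner_comm y x, mul_pow, mnorm_sq hm, ← sq] using h

theorem two_mul_abs_minner_le (hm : ∀ i, 0 < m i) (x y : Conf d N) :
    2 * |minner m x y| ≤ minner m x x + minner m y y := by
  rw [← mnorm_sq hm, ← mnorm_sq hm]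
  linarith [abs_minner_le_mnorm_mul_mnorm hm x y, two_mul_le_add_sq (mnorm m x) (mnorm m y)]

theorem minner_add_self_le (hm : ∀ i, 0 < m i) (x y : Conf d N) :
    minner m (x + y) (x + y) ≤ 2 * (minner m x x + minner m y y) := by
  simp only [minner_add_left, minner_add_right, minner_comm y x]
  linarith [two_mul_abs_minner_le hm x y, le_abs_self (minner m x y)]

theorem exists_norm_sq_le_mul_minner (hm : ∀ i, 0 < m i) :
    ∃ c > 0, ∀ x : Conf d N, ‖x‖ ^ 2 ≤ c * minner m x x := by
  have hinv : ∀ i, 0 ≤ (m i)⁻¹ := fun i => (inv_pos.2 (hm i)).le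
  have hc : 0 < 1 + ∑ i, (m i)⁻¹ := add_pos_of_pos_of_nonneg one_pos
    (Finset.sum_nonneg fun i _ => hinv i)
  refine ⟨1 + ∑ i, (m i)⁻¹, hc, fun x => ?_⟩
  have hx := minner_self_nonneg hm x
  refine (Real.le_sqrt (norm_nonneg x) (mul_nonneg hc.le hx)).1 <|
    (pi_norm_le_iff_of_nonneg (Real.sqrt_nonneg _)).2 fun i => Real.le_sqrt_of_sq_le ?_
  have hxi : m i * ‖x i‖ ^ 2 ≤ minner m x x := by
    rw [← real_inner_self_eq_norm_sq]
    exact Finset.single_le_sum (f := fun i => m i * ⟪x i, x i⟫)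
      (fun i _ => mul_nonneg (hm i).le real_inner_self_nonneg) (Finset.mem_univ i)
  have hmi : (m i)⁻¹ ≤ 1 + ∑ i, (m i)⁻¹ := by
    linarith [Finset.single_le_sum (fun i _ => hinv i) (Finset.mem_univ i)]
  calc ‖x i‖ ^ 2 = (m i)⁻¹ * (m i * ‖x i‖ ^ 2) := (inv_mul_cancel_left₀ (hm i).ne' _).symm
    _ ≤ (m i)⁻¹ * minner m x x := mul_le_mul_of_nonneg_left hxi (hinv i)
    _ ≤ _ := mul_le_mul_of_nonneg_right hmi hx

theorem minner_self_pos (hm : ∀ i, 0 < m i) {x : Conf d N} (hx : x ≠ 0) : 0 < minner m x x := by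
  obtain ⟨c, -, hc⟩ := exists_norm_sq_le_mul_minner (d := d) hm
  refine (minner_self_nonneg hm x).lt_of_ne' fun h => hx ?_
  simpa [h, sq_nonneg, le_antisymm_iff] using hc x

theorem mnorm_pos (hm : ∀ i, 0 < m i) {x : Conf d N} (hx : x ≠ 0) : 0 < mnorm m x :=
  Real.sqrt_pos.2 (minner_self_pos hm hx)

theorem aestronglyMeasurable_minner {α : Type*} [MeasurableSpace α] {μ : Measure α}
    {f g : α → Conf d N} (hf : AEStronglyMeasurable f μ) (hg : AEStronglyMeasurable g μ) :
    AEStronglyMeasurable (fun t => minner m (f t) (g t)) μ := by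
  simpa only [massForm_apply] using (massForm m).aestronglyMeasurable_comp₂ hf hg

theorem inX_iff_mem_ker (x : Conf d N) : inX m x ↔
    x ∈ LinearMap.ker (∑ i, m i • LinearMap.proj i : Conf d N →ₗ[ℝ] EuclideanSpace ℝ (Fin d)) := by
  simp [inX]

theorem inX.add {x y : Conf d N} (hx : inX m x) (hy : inX m y) : inX m (x + y) := by
  rw [inX_iff_mem_ker] at *; exact add_mem hx hy

theorem inX.sub {x y : Conf d N} (hx : inX m x) (hy : inX m y) : inX m (x - y) := by
  rw [inX_iff_mem_ker] at *; exact sub_mem hx hy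

theorem inX.smul {x : Conf d N} (hx : inX m x) (c : ℝ) : inX m (c • x) := by
  rw [inX_iff_mem_ker] at *; exact Submodule.smul_mem _ c hx

end MassInner

namespace IsPrimitiveOn

variable {m : Fin N → ℝ} {f f' g g' : ℝ → Conf d N} {a b : ℝ}

theorem minner_const_left (hf : IsPrimitiveOn f f' a b) (x : Conf d N) :
    IsPrimitiveOn (fun t => minner m x (f t)) (fun t => minner m x (f' t)) a b := by
  simpa only [massForm_apply] using hf.clm_apply (massForm m x)

theorem minner_apply (hf : IsPrimitiveOn f f' a b) (hg : IsPrimitiveOn g g' a b) :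
    IsPrimitiveOn (fun t => minner m (f t) (g t))
      (fun t => minner m (f' t) (g t) + minner m (f t) (g' t)) a b := by
  have hcoord : ∀ {k k' : ℝ → Conf d N}, IsPrimitiveOn k k' a b → ∀ (i : Fin N) (l : Fin d),
      IsPrimitiveOn (fun t => k t i l) (fun t => k' t i l) a b := fun hk i l =>
    hk.clm_apply ((EuclideanSpace.proj l).comp (ContinuousLinearMap.proj (R := ℝ) i))
  have h := sum Finset.univ hf.le fun i _ => (const (m i) hf.le).mul
    (sum Finset.univ hf.le fun l _ => (hcoord hf i l).mul (hcoord hg i l))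
  refine h.congr (fun t _ => ?_) fun t _ => ?_
  · simp only [minner, PiLp.inner_apply]
    exact Finset.sum_congr rfl fun i _ => by simp [mul_comm]
  · simp only [minner, PiLp.inner_apply, ← Finset.sum_add_distrib]
    refine Finset.sum_congr rfl fun i _ => ?_
    rw [zero_mul, zero_add, ← mul_add, Finset.sum_add_distrib]
    simp [mul_comm]

theorem minner_sub_self_le (hf : IsPrimitiveOn f f' a b) (hm : ∀ i, 0 < m i)
    (hi : IntervalIntegrable (fun t => minner m (f' t) (f' t)) volume a b) :
    minner m (f b - f a) (f b - f a) ≤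
      (b - a) * ∫ t in a..b, minner m (f' t) (f' t) := by
  rcases hf.le.eq_or_lt with rfl | hab
  · simp [minner_zero_right]
  set w := f b - f a
  have : 0 < b - a := sub_pos.2 hab
  have hlin := hf.minner_const_left (m := m) w
  have hval : ∫ t in a..b, minner m w (f' t) = minner m w w := by
    rw [hlin.integral_eq_sub, ← minner_sub_right]
  have hmono : ∫ t in a..b, minner m w (f' t) ≤
      ∫ t in a..b, (minner m w w / (2 * (b - a)) +
        (b - a) / 2 * minner m (f' t) (f' t)) := by
    refine intervalIntegral.integral_mono_on hab.le hlin.intervalIntegrable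
      (intervalIntegrable_const.add (hi.const_mul _)) fun t _ => ?_
    have h := minner_self_nonneg hm (w - (b - a) • f' t)
    simp only [minner_sub_left, minner_sub_right, minner_smul_left, minner_smul_right,
      minner_comm (f' t) w] at h
    rw [← sub_nonneg]
    refine (div_nonneg h (by positivity : 0 ≤ 2 * (b - a))).trans_eq ?_
    field_simp
    ring
  rw [hval, intervalIntegral.integral_add intervalIntegrable_const (hi.const_mul _),
    intervalIntegral.integral_const, intervalIntegral.integral_const_mul, smul_eq_mul] at hmono
  have hcancel : (b - a) * (minner m w w / (2 * (b - a))) = minner m w w / 2 := by field_simp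
  linarith

end IsPrimitiveOn

/-! ### The Newtonian potential -/

section Potential

variable {m : Fin N → ℝ} {x b : Conf d N}

theorem not_collision_iff_injective : ¬ collision x ↔ Function.Injective x := by
  simp only [collision, Function.Injective]
  grind

theorem isOpen_not_collision : IsOpen {x : Conf d N | ¬ collision x} := by
  simp only [collision, not_exists, not_and, Set.ofPred_forall]
  exact isOpen_iInter_of_finite fun i => isOpen_iInter_of_finite fun j =>
    isOpen_iInter_of_finite fun _ => isOpen_ne_fun (continuous_apply i) (continuous_apply j)

theorem not_collision_smul (hx : ¬ collision x) {c : ℝ} (hc : c ≠ 0) : ¬ collision (c • x) := by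
  rw [not_collision_iff_injective] at *
  exact (smul_right_injective _ hc).comp hx

theorem ne_zero_of_not_collision [Nontrivial (Fin N)] (hx : ¬ collision x) : x ≠ 0 := by
  rintro rfl
  obtain ⟨i, j, hij⟩ := exists_pair_ne (Fin N)
  exact hx ⟨i, j, hij, rfl⟩

theorem U_term_nonneg (hm : ∀ i, 0 < m i) (x : Conf d N) (i j : Fin N) :
    0 ≤ if i < j then m i * m j / ‖x i - x j‖ else 0 := by
  have := hm i
  have := hm j
  positivity

theorem U_nonneg (hm : ∀ i, 0 < m i) (x : Conf d N) : 0 ≤ U m x :=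
  Finset.sum_nonneg fun i _ => Finset.sum_nonneg fun j _ => U_term_nonneg hm x i j

theorem U_pos [Nontrivial (Fin N)] (hm : ∀ i, 0 < m i) (hx : ¬ collision x) : 0 < U m x := by
  obtain ⟨i, j, hij⟩ := exists_pair_lt (Fin N)
  have hxij : x i - x j ≠ 0 :=
    sub_ne_zero.2 ((not_collision_iff_injective.1 hx).ne hij.ne)
  refine Finset.sum_pos' (fun i _ => Finset.sum_nonneg fun j _ => U_term_nonneg hm x i j)
    ⟨i, Finset.mem_univ i, Finset.sum_pos' (fun j _ => U_term_nonneg hm x i j)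
      ⟨j, Finset.mem_univ j, ?_⟩⟩
  rw [if_pos hij]
  exact div_pos (mul_pos (hm i) (hm j)) (norm_pos_iff.2 hxij)

theorem U_smul {c : ℝ} (hc : 0 ≤ c) (x : Conf d N) : U m (c • x) = U m x / c := by
  simp only [U, Finset.sum_div, ite_div, zero_div]
  refine Finset.sum_congr rfl fun i _ => Finset.sum_congr rfl fun j _ => ?_
  rw [Pi.smul_apply, Pi.smul_apply, ← smul_sub, norm_smul, Real.norm_of_nonneg hc, div_div,
    mul_comm c]

theorem continuousAt_U (hx : ¬ collision x) : ContinuousAt (U m) x := by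
  refine tendsto_finsetSum _ fun i _ => tendsto_finsetSum _ fun j _ => ?_
  split_ifs with hij
  · refine ContinuousAt.div continuousAt_const (by fun_prop) (norm_ne_zero_iff.2 ?_)
    exact sub_ne_zero.2 ((not_collision_iff_injective.1 hx).ne hij.ne)
  · exact tendsto_const_nhds

theorem IsMinCentral.nontrivial (hm : ∀ i, 0 < m i) (hb : IsMinCentral m b) :
    Nontrivial (Fin N) := by
  by_contra hN
  rw [not_nontrivial_iff_subsingleton] at hN
  have hb0 : b = 0 := funext fun i => by
    have h : ∑ j, m j • b j = 0 := hb.1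
    rw [Fintype.sum_subsingleton _ i] at h
    exact (smul_eq_zero.1 h).resolve_left (hm i).ne'
  simpa [hb0, minner_zero_right] using hb.2.2.1

theorem IsMinCentral.U_pos (hm : ∀ i, 0 < m i) (hb : IsMinCentral m b) : 0 < U m b :=
  have := hb.nontrivial hm
  NBodyHJ.U_pos hm hb.2.1

/-- By minimality and homogeneity, `U` dominates the Kepler potential. -/
theorem IsMinCentral.div_mnorm_le_U (hm : ∀ i, 0 < m i) (hb : IsMinCentral m b)
    (hx : inOmega m x) : U m b / mnorm m x ≤ U m x := by
  have := hb.nontrivial hm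
  have hpos := mnorm_pos hm (ne_zero_of_not_collision hx.2)
  have h := hb.2.2.2 ((mnorm m x)⁻¹ • x) (hx.1.smul _)
    (not_collision_smul hx.2 (inv_pos.2 hpos).ne') (by
      rw [minner_smul_left, minner_smul_right, ← mnorm_sq hm]
      field_simp)
  rwa [U_smul (inv_pos.2 hpos).le, div_inv_eq_mul, ← div_le_iff₀ hpos] at h

end Potential

/-! ### Power asymptotics -/

section Asymptotics

theorem isBigO_rpow_add_sub_rpow (s h : ℝ) :
    (fun t : ℝ => (t + h) ^ s - t ^ s) =O[atTop] fun t => t ^ (s - 1) := by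
  have hderiv : HasDerivAt (fun u : ℝ => (1 + u) ^ s) s 0 := by
    simpa using ((hasDerivAt_id (0 : ℝ)).const_add 1).rpow_const (p := s) (Or.inl (by simp))
  have hlim : Tendsto (fun t : ℝ => h / t) atTop (𝓝 0) := tendsto_const_nhds.div_atTop tendsto_id
  have hO : (fun t : ℝ => (1 + h / t) ^ s - 1) =O[atTop] fun t => t ^ (-1 : ℝ) := by
    have h1 := hderiv.isBigO_sub.comp_tendsto hlim
    simp only [Function.comp_def, add_zero, Real.one_rpow, sub_zero] at h1
    refine h1.trans (.of_bound |h| (Eventually.of_forall fun t => ?_))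
    rw [Real.rpow_neg_one, div_eq_mul_inv, norm_mul, Real.norm_eq_abs h]
  refine (((Asymptotics.isBigO_refl (fun t : ℝ => t ^ s) atTop).mul hO).congr' ?_ ?_)
  · filter_upwards [eventually_gt_atTop 0, eventually_gt_atTop (-h)] with t ht hth
    have hpos : 0 ≤ 1 + h / t := by
      rw [← div_self ht.ne', ← add_div]
      exact div_nonneg (by linarith) ht.le
    rw [mul_sub, mul_one, ← Real.mul_rpow ht.le hpos, mul_add, mul_one, mul_div_cancel₀ h ht.ne']
  · filter_upwards [eventually_gt_atTop 0] with t ht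
    rw [← Real.rpow_add ht, sub_eq_add_neg]

theorem isBigO_const_mul_shift_sub (c s h : ℝ) :
    (fun t : ℝ => c * (t + h) ^ s - c * t ^ s) =O[atTop] fun t => t ^ (s - 1) := by
  simpa only [← mul_sub] using (isBigO_rpow_add_sub_rpow s h).const_mul_left c

theorem isBigO_rpow_mul_shift_sub {f g : ℝ → ℝ} (hf : f =O[atTop] fun t => t)
    (hfg : (fun t => f t - g t) =O[atTop] fun _ => (1 : ℝ)) (c s h : ℝ) :
    (fun t => c * (t + h) ^ s * f t - c * t ^ s * g t) =O[atTop] fun t => t ^ s := by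
  have h1 : (fun t => (c * (t + h) ^ s - c * t ^ s) * f t) =O[atTop] fun t => t ^ s := by
    refine ((isBigO_const_mul_shift_sub c s h).mul hf).congr' .rfl ?_
    filter_upwards [eventually_gt_atTop 0] with t ht
    rw [← Real.rpow_add_one ht.ne', sub_add_cancel]
  have h2 : (fun t => c * t ^ s * (f t - g t)) =O[atTop] fun t => t ^ s := by
    simpa using ((Asymptotics.isBigO_refl (fun t : ℝ => t ^ s) atTop).const_mul_left c).mul hfg
  refine (h1.add h2).congr_left fun t => ?_
  ring

theorem isBigO_id_comp_add_right {f : ℝ → ℝ} (hf : f =O[atTop] fun t => t) (h : ℝ) :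
    (fun t => f (t + h)) =O[atTop] fun t => t :=
  (hf.comp_tendsto (tendsto_atTop_add_const_right _ h tendsto_id)).trans
    ((Asymptotics.isBigO_refl _ _).add (Asymptotics.isLittleO_const_id_atTop h).isBigO)

theorem integrableOn_Ioi_of_isBigO_rpow {f : ℝ → ℝ} {a s : ℝ} (hf : ContinuousOn f (Ici a))
    (hO : f =O[atTop] fun t => t ^ s) (hs : s < -1) : IntegrableOn f (Ioi a) :=
  (LocallyIntegrableOn.integrableOn_of_isBigO_atTop (hf.locallyIntegrableOn measurableSet_Ici) hO
    (integrableAtFilter_rpow_atTop_iff.2 hs)).mono_set Ioi_subset_Ici_self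

end Asymptotics

/-! ### The homothetic parabolic motion -/

section ReferencePath

variable {m : Fin N → ℝ} {b : Conf d N} {t h : ℝ}

/-- The radius `β t^{2/3}` of the reference motion `r₀`, so that `parR0 m b t` is
`refRadius m b t • b` by definition. -/
def refRadius (m : Fin N → ℝ) (b : Conf d N) (t : ℝ) : ℝ := beta m b * t ^ ((2 : ℝ) / 3)

/-- The radial velocity of the reference motion `r₀`. -/
def refSpeed (m : Fin N → ℝ) (b : Conf d N) (t : ℝ) : ℝ :=
  beta m b * (2 / 3) * t ^ (-(1 : ℝ) / 3)

/-- The radial acceleration of the reference motion `r₀`. -/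
def refAccel (m : Fin N → ℝ) (b : Conf d N) (t : ℝ) : ℝ :=
  beta m b * (-(2 : ℝ) / 9) * t ^ (-(4 : ℝ) / 3)

theorem parR0_one : parR0 m b 1 = beta m b • b := by simp [parR0]

theorem hasDerivAt_refRadius (ht : 0 < t) :
    HasDerivAt (refRadius m b) (refSpeed m b t) t := by
  refine ((Real.hasDerivAt_rpow_const (p := (2 : ℝ) / 3) (Or.inl ht.ne')).const_mul
    (beta m b)).congr_deriv ?_
  rw [refSpeed, show (2 : ℝ) / 3 - 1 = -1 / 3 by norm_num, mul_assoc]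

theorem hasDerivAt_refSpeed (ht : 0 < t) :
    HasDerivAt (refSpeed m b) (refAccel m b t) t := by
  refine ((Real.hasDerivAt_rpow_const (p := -(1 : ℝ) / 3) (Or.inl ht.ne')).const_mul
    (beta m b * (2 / 3))).congr_deriv ?_
  rw [refAccel, show -(1 : ℝ) / 3 - 1 = -4 / 3 by norm_num]
  ring

theorem continuousOn_refRadius : ContinuousOn (refRadius m b) (Ioi 0) := fun _ ht =>
  (hasDerivAt_refRadius ht).continuousAt.continuousWithinAt

theorem continuousOn_refSpeed : ContinuousOn (refSpeed m b) (Ioi 0) := fun _ ht =>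
  (hasDerivAt_refSpeed ht).continuousAt.continuousWithinAt

theorem continuousOn_refAccel : ContinuousOn (refAccel m b) (Ioi 0) := fun t ht =>
  (continuousAt_const.mul
    (Real.continuousAt_rpow_const t _ (Or.inl (ne_of_gt ht)))).continuousWithinAt

theorem isPrimitiveOn_refSpeed {T : ℝ} (hT : 1 ≤ T) :
    IsPrimitiveOn (refSpeed m b) (refAccel m b) 1 T :=
  have hpos : Icc 1 T ⊆ Ioi 0 := fun _ ht => one_pos.trans_le ht.1
  .of_hasDerivAt hT (fun _ ht => hasDerivAt_refSpeed (hpos ht)) (continuousOn_refAccel.mono hpos)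

theorem isPrimitiveOn_refRadius {T : ℝ} (hT : 1 ≤ T) :
    IsPrimitiveOn (refRadius m b) (refSpeed m b) 1 T :=
  have hpos : Icc 1 T ⊆ Ioi 0 := fun _ ht => one_pos.trans_le ht.1
  .of_hasDerivAt hT (fun _ ht => hasDerivAt_refRadius (hpos ht)) (continuousOn_refSpeed.mono hpos)

theorem isPrimitiveOn_parR0 {T : ℝ} (hT : 1 ≤ T) :
    IsPrimitiveOn (parR0 m b) (fun t => refSpeed m b t • b) 1 T :=
  (isPrimitiveOn_refRadius hT).clm_apply ((ContinuousLinearMap.id ℝ ℝ).smulRight b)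

theorem beta_nonneg (hm : ∀ i, 0 < m i) : 0 ≤ beta m b :=
  Real.rpow_nonneg (by linarith [U_nonneg hm b]) _

theorem beta_pos (hU : 0 < U m b) : 0 < beta m b := Real.rpow_pos_of_pos (by linarith) _

theorem beta_pow_three (hm : ∀ i, 0 < m i) : beta m b ^ 3 = 9 * U m b / 2 := by
  have := U_nonneg hm b
  rw [beta, ← Real.rpow_natCast, ← Real.rpow_mul (by positivity)]
  norm_num

theorem refRadius_pos (hU : 0 < U m b) (ht : 0 < t) : 0 < refRadius m b t :=
  mul_pos (beta_pos hU) (Real.rpow_pos_of_pos ht _)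

theorem refRadius_pow_three (hm : ∀ i, 0 < m i) (ht : 0 < t) :
    refRadius m b t ^ 3 = 9 * U m b / 2 * t ^ 2 := by
  rw [refRadius, mul_pow, beta_pow_three hm, ← Real.rpow_natCast (t ^ ((2 : ℝ) / 3)),
    ← Real.rpow_mul ht.le]
  norm_num

theorem refRadius_eq_refSpeed (ht : 0 < t) : refRadius m b t = 3 / 2 * t * refSpeed m b t := by
  rw [refRadius, refSpeed, show (2 : ℝ) / 3 = 1 + -1 / 3 by norm_num, Real.rpow_add ht,
    Real.rpow_one]
  ring

theorem refAccel_eq_refRadius (ht : 0 < t) :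
    refAccel m b t = -(2 / 9) * refRadius m b t / t ^ 2 := by
  rw [refRadius, refAccel, show -(4 : ℝ) / 3 = 2 / 3 - (2 : ℕ) by norm_num,
    Real.rpow_sub_natCast ht.ne']
  ring

theorem U_parR0 (hU : 0 < U m b) (ht : 0 < t) : U m (parR0 m b t) = U m b / refRadius m b t :=
  U_smul (refRadius_pos hU ht).le b

theorem U_parR0_eq_refSpeed_sq (hm : ∀ i, 0 < m i) (hU : 0 < U m b) (ht : 0 < t) :
    U m (parR0 m b t) = refSpeed m b t ^ 2 / 2 := by
  have hr := refRadius_pos hU ht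
  have h3 := refRadius_pow_three (b := b) hm ht
  have hs : refSpeed m b t = 2 / 3 * refRadius m b t / t := by
    rw [refRadius_eq_refSpeed ht]; field_simp
  rw [U_parR0 hU ht, hs]
  field_simp
  linarith

theorem refAccel_eq_neg_div_sq (hm : ∀ i, 0 < m i) (hU : 0 < U m b) (ht : 0 < t) :
    refAccel m b t = -(U m b / refRadius m b t ^ 2) := by
  have hr := refRadius_pos hU ht
  have h3 := refRadius_pow_three (b := b) hm ht
  rw [refAccel_eq_refRadius ht]
  field_simp
  linarith

theorem isBigO_refSpeed_shift_sub :
    (fun t => refSpeed m b (t + h) - refSpeed m b t) =O[atTop] fun t => t ^ (-(4 : ℝ) / 3) := by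
  simpa [refSpeed, show -(1 : ℝ) / 3 - 1 = -4 / 3 by norm_num] using
    isBigO_const_mul_shift_sub (beta m b * (2 / 3)) (-1 / 3) h

theorem refRadius_mul_refAccel (ht : 0 < t) :
    refRadius m b t * refAccel m b t = -(refSpeed m b t ^ 2 / 2) := by
  have hs : refSpeed m b t = 2 / 3 * refRadius m b t / t := by
    rw [refRadius_eq_refSpeed ht]; field_simp
  rw [refAccel_eq_refRadius ht, hs]
  field_simp
  ring

end ReferencePath

/-! ### Integrals over half-lines -/

section HalfLine

theorem measurePreserving_add_right_Ioi (a h : ℝ) :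
    MeasurePreserving (· + h) (volume.restrict (Ioi a)) (volume.restrict (Ioi (a + h))) := by
  simpa [preimage_add_const_Ioi] using (measurePreserving_add_right volume h).restrict_preimage
    (measurableSet_Ioi (a := a + h))

theorem integrableOn_Ioi_comp_add_right {E : Type*} [NormedAddCommGroup E] (f : ℝ → E) (a h : ℝ) :
    IntegrableOn (fun t => f (t + h)) (Ioi a) ↔ IntegrableOn f (Ioi (a + h)) :=
  (measurePreserving_add_right_Ioi a h).integrable_comp_emb
    (measurableEmbedding_addRight h)

theorem ae_restrict_Ioi_comp_add_right {p : ℝ → Prop} (a h : ℝ) :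
    (∀ᵐ t ∂volume.restrict (Ioi a), p (t + h)) ↔ ∀ᵐ t ∂volume.restrict (Ioi (a + h)), p t := by
  rw [← (measurePreserving_add_right_Ioi a h).map_eq,
    (measurableEmbedding_addRight h).ae_map_iff]

theorem aestronglyMeasurable_Ioi_of_isPrimitiveOn {E : Type*} [NormedAddCommGroup E]
    [NormedSpace ℝ E] {f f' : ℝ → E} {a : ℝ} (hf : ∀ T ≥ a, IsPrimitiveOn f f' a T) :
    AEStronglyMeasurable f' (volume.restrict (Ioi a)) := by
  have hcover : Ioi a = ⋃ n : ℕ, Ioc a (a + n) := by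
    refine (iUnion_Ioc_eq_Ioi_self_iff.2 fun t _ => ?_).symm
    obtain ⟨n, hn⟩ := exists_nat_ge (t - a)
    exact ⟨n, sub_le_iff_le_add'.1 hn⟩
  rw [hcover, aestronglyMeasurable_iUnion_iff]
  intro n
  have hn : a ≤ a + n := le_add_of_nonneg_right n.cast_nonneg
  exact ((intervalIntegrable_iff_integrableOn_Ioc_of_le hn).1
    (hf _ hn).intervalIntegrable).aestronglyMeasurable

theorem continuousOn_Ici_of_isPrimitiveOn {E : Type*} [NormedAddCommGroup E] [NormedSpace ℝ E]
    {f f' : ℝ → E} {a : ℝ} (hf : ∀ T ≥ a, IsPrimitiveOn f f' a T) : ContinuousOn f (Ici a) :=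
  continuousOn_of_locally_continuousOn fun t ht => ⟨Iio (t + 1), isOpen_Iio, lt_add_one t,
    (hf (t + 1) (ht.trans (lt_add_one t).le)).continuousOn.mono fun _ hs => ⟨hs.1, hs.2.le⟩⟩

variable {m : Fin N → ℝ}

theorem integrableOn_minner_self_congr_of_sub {f g : ℝ → Conf d N} {s : Set ℝ}
    (hm : ∀ i, 0 < m i) (hf : AEStronglyMeasurable f (volume.restrict s))
    (hg : AEStronglyMeasurable g (volume.restrict s))
    (hfg : IntegrableOn (fun t => minner m (f t - g t) (f t - g t)) s) :
    IntegrableOn (fun t => minner m (f t) (f t)) s ↔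
      IntegrableOn (fun t => minner m (g t) (g t)) s := by
  have main : ∀ {k l : ℝ → Conf d N}, AEStronglyMeasurable l (volume.restrict s) →
      IntegrableOn (fun t => minner m (l t - k t) (l t - k t)) s →
      IntegrableOn (fun t => minner m (k t) (k t)) s →
      IntegrableOn (fun t => minner m (l t) (l t)) s := fun {k l} hl hkl hk => by
    refine ((hk.add hkl).const_mul 2).mono' (aestronglyMeasurable_minner hl hl)
      (ae_of_all _ fun t => ?_)
    rw [Real.norm_of_nonneg (minner_self_nonneg hm _)]
    simpa using minner_add_self_le hm (k t) (l t - k t)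
  refine ⟨main hg ?_, main hf hfg⟩
  simpa only [← neg_sub (f _) (g _), minner_neg_neg] using hfg

end HalfLine

/-! ### Parabolic curves -/

section Parabolic

variable {m : Fin N → ℝ} {b : Conf d N} {γ γ' : ℝ → Conf d N} {t T : ℝ}

/-- The Newtonian Lagrangian `½‖γ̇‖² + U(γ)` along the motion `γ` with velocity `γ'`. -/
def lagrangian (m : Fin N → ℝ) (γ γ' : ℝ → Conf d N) (t : ℝ) : ℝ :=
  minner m (γ' t) (γ' t) / 2 + U m (γ t)

/-- The deviation `φ` of the motion `γ` from the reference motion, normalized by `φ(1) = 0`; it is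
the curve for which `γ = parCurve m b (γ 1) φ`. -/
def deviation (m : Fin N → ℝ) (b : Conf d N) (γ : ℝ → Conf d N) (t : ℝ) : Conf d N :=
  γ t - parR0 m b t - (γ 1 - beta m b • b)

/-- The velocity of `deviation m b γ`, where `γ'` is the velocity of `γ`. -/
def deviationVel (m : Fin N → ℝ) (b : Conf d N) (γ' : ℝ → Conf d N) (t : ℝ) : Conf d N :=
  γ' t - refSpeed m b t • b

/-- The renormalized Lagrangian as a function of the motion instead of its deviation. -/
def renLagrangian (m : Fin N → ℝ) (b : Conf d N) (γ γ' : ℝ → Conf d N) : ℝ → ℝ :=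
  parIntegrand m b (γ 1) (deviation m b γ) (deviationVel m b γ')

/-- The renormalized action of the motion `γ` with velocity `γ'`. -/
def renAction (m : Fin N → ℝ) (b : Conf d N) (γ γ' : ℝ → Conf d N) : ℝ :=
  ∫ t in Ioi 1, renLagrangian m b γ γ' t

/-- The motions `γ` with velocity `γ'` on `[1, ∞)` whose deviation from the reference motion
belongs to `D₀^{1,2}(1, ∞)`. -/
structure IsParabolicCurve (m : Fin N → ℝ) (b : Conf d N) (γ γ' : ℝ → Conf d N) : Prop where
  mem : ∀ t ≥ 1, inX m (γ t)
  isPrimitiveOn : ∀ T ≥ 1, IsPrimitiveOn γ γ' 1 T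
  integrableOn_sq :
    IntegrableOn (fun t => minner m (deviationVel m b γ' t) (deviationVel m b γ' t)) (Ioi 1)

theorem parCurve_deviation : parCurve m b (γ 1) (deviation m b γ) = γ := by
  funext t
  simp only [parCurve, deviation]
  abel

theorem deviation_one : deviation m b γ 1 = 0 := by simp [deviation, parR0_one]

theorem isPrimitiveOn_deviation (hγ : IsPrimitiveOn γ γ' 1 T) :
    IsPrimitiveOn (deviation m b γ) (deviationVel m b γ') 1 T :=
  (hγ.sub (isPrimitiveOn_parR0 hγ.le)).sub_const _

theorem renLagrangian_eq (hm : ∀ i, 0 < m i) (hU : 0 < U m b) (ht : 0 < t) :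
    renLagrangian m b γ γ' t =
      minner m (deviationVel m b γ' t) (deviationVel m b γ' t) / 2 + U m (γ t) -
        refAccel m b t * (minner m b (deviation m b γ t) - refRadius m b t) := by
  have haccel : parR0'' m b t = refAccel m b t • b := rfl
  rw [renLagrangian, parIntegrand, parCurve_deviation, mnorm_sq hm, haccel, minner_smul_left,
    U_parR0_eq_refSpeed_sq hm hU ht]
  linear_combination -refRadius_mul_refAccel (m := m) (b := b) ht

/-- The right-hand side is the derivative of `ṙ (⟨b, φ⟩ + 2 r)`, where `φ` is the deviation. -/
theorem lagrangian_sub_renLagrangian (hm : ∀ i, 0 < m i) (hb : IsMinCentral m b) (ht : 0 < t) :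
    lagrangian m γ γ' t - renLagrangian m b γ γ' t =
      refAccel m b t * (minner m b (deviation m b γ t) + 2 * refRadius m b t) +
        refSpeed m b t * (minner m b (deviationVel m b γ' t) + 2 * refSpeed m b t) := by
  have hsq : minner m (γ' t) (γ' t) = minner m (deviationVel m b γ' t) (deviationVel m b γ' t) +
      2 * refSpeed m b t * minner m b (deviationVel m b γ' t) + refSpeed m b t ^ 2 := by
    simp only [deviationVel, minner_sub_left, minner_sub_right, minner_smul_left,
      minner_smul_right, minner_comm (γ' t) b, hb.2.2.1]
    ring
  rw [renLagrangian_eq hm (hb.U_pos hm) ht, lagrangian, hsq]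
  linear_combination -3 * refRadius_mul_refAccel (m := m) (b := b) ht

theorem integral_renLagrangian (hm : ∀ i, 0 < m i) (hb : IsMinCentral m b)
    (hγ : IsPrimitiveOn γ γ' 1 T)
    (hi : IntervalIntegrable (renLagrangian m b γ γ') volume 1 T) :
    ∫ t in (1 : ℝ)..T, renLagrangian m b γ γ' t = (∫ t in (1 : ℝ)..T, lagrangian m γ γ' t) -
      (refSpeed m b T * (minner m b (deviation m b γ T) + 2 * refRadius m b T) -
        refSpeed m b 1 * (2 * refRadius m b 1)) := by
  have hr := isPrimitiveOn_refRadius (m := m) (b := b) hγ.le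
  have hprim := (isPrimitiveOn_refSpeed (m := m) (b := b) hγ.le).mul
    (((isPrimitiveOn_deviation (m := m) (b := b) hγ).minner_const_left (m := m) b).add (hr.add hr))
  have hL : EqOn (fun t => lagrangian m γ γ' t) (fun t => renLagrangian m b γ γ' t +
      (refAccel m b t * (minner m b (deviation m b γ t) + (refRadius m b t + refRadius m b t)) +
        refSpeed m b t * (minner m b (deviationVel m b γ' t) +
          (refSpeed m b t + refSpeed m b t)))) (uIcc 1 T) := fun t ht => by
    rw [uIcc_of_le hγ.le] at ht
    simp only [← two_mul, ← lagrangian_sub_renLagrangian hm hb (one_pos.trans_le ht.1),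
      add_sub_cancel]
  rw [intervalIntegral.integral_congr hL, intervalIntegral.integral_add hi hprim.intervalIntegrable,
    hprim.integral_eq_sub, deviation_one, minner_zero_right]
  ring

theorem IsParabolicCurve.isBigO_minner_deviation (hm : ∀ i, 0 < m i) (hb : minner m b b = 1)
    (hγ : IsParabolicCurve m b γ γ') :
    (fun t => minner m b (deviation m b γ t)) =O[atTop] fun t => t := by
  set K := ∫ t in Ioi 1, minner m (deviationVel m b γ' t) (deviationVel m b γ' t)
  have hK : 0 ≤ K := setIntegral_nonneg measurableSet_Ioi fun t _ => minner_self_nonneg hm _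
  refine .of_bound (1 + K) ?_
  filter_upwards [eventually_ge_atTop 1] with t ht
  have hsq : minner m (deviation m b γ t) (deviation m b γ t) ≤ (t - 1) * K := by
    have hi := hγ.integrableOn_sq.mono_set (Ioc_subset_Ioi_self : Ioc 1 t ⊆ Ioi 1)
    have hJ := (isPrimitiveOn_deviation (hγ.isPrimitiveOn t ht)).minner_sub_self_le hm
      ((intervalIntegrable_iff_integrableOn_Ioc_of_le ht).2 hi)
    rw [deviation_one, sub_zero, intervalIntegral.integral_of_le ht] at hJ
    exact hJ.trans (mul_le_mul_of_nonneg_left (setIntegral_mono_set hγ.integrableOn_sq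
      (ae_of_all _ fun s => minner_self_nonneg hm _) Ioc_subset_Ioi_self.eventuallyLE)
      (sub_nonneg.2 ht))
  have hCS := two_mul_abs_minner_le hm b (deviation m b γ t)
  rw [Real.norm_eq_abs, Real.norm_of_nonneg (zero_le_one.trans ht)]
  nlinarith

end Parabolic

/-! ### Cutting a motion -/

section Cutting

variable {m : Fin N → ℝ} {b : Conf d N} {γ γ' : ℝ → Conf d N} {T h : ℝ}

/-- The `H¹` arcs `c` in `X` with velocity `c'` on `[a, b]`. -/
structure IsSobolevArc (m : Fin N → ℝ) (c c' : ℝ → Conf d N) (a b : ℝ) : Prop where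
  mem : ∀ t ∈ Icc a b, inX m (c t)
  isPrimitiveOn : IsPrimitiveOn c c' a b
  integrableOn_sq : IntegrableOn (fun t => minner m (c' t) (c' t)) (Ioc a b)

/-- The arcs of finite Lagrangian action. Almost every configuration is required to be
collision-free because `U` takes junk values at collisions. -/
structure IsFiniteActionArc (m : Fin N → ℝ) (c c' : ℝ → Conf d N) (a b : ℝ) : Prop
    extends IsSobolevArc m c c' a b where
  integrableOn_U : IntegrableOn (fun t => U m (c t)) (Ioc a b)
  ae_not_collision : ∀ᵐ t ∂volume.restrict (Ioc a b), ¬ collision (c t)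

/-- The parabolic curves whose deviation has finite renormalized action. -/
structure IsAdmissibleCurve (m : Fin N → ℝ) (b : Conf d N) (γ γ' : ℝ → Conf d N) : Prop
    extends IsParabolicCurve m b γ γ' where
  integrableOn_renLagrangian : IntegrableOn (renLagrangian m b γ γ') (Ioi 1)
  ae_not_collision : ∀ᵐ t ∂volume.restrict (Ioi 1), ¬ collision (γ t)

/-- The motion `γ` with its clock advanced by `h`. -/
abbrev timeShift (h : ℝ) (γ : ℝ → Conf d N) : ℝ → Conf d N := fun t => γ (t + h)

theorem integrableOn_refSpeed_shift_sub_sq (hh : 0 ≤ h) :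
    IntegrableOn (fun t => (refSpeed m b (t + h) - refSpeed m b t) ^ 2) (Ioi 1) := by
  have hcont : ContinuousOn (fun t => (refSpeed m b (t + h) - refSpeed m b t) ^ 2) (Ici 1) := by
    refine ((continuousOn_refSpeed.comp (by fun_prop) fun t ht => ?_).sub
      (continuousOn_refSpeed.mono fun t ht => ?_)).pow 2
    all_goals have ht : (1 : ℝ) ≤ t := ht
    all_goals simp only [mem_Ioi]; linarith
  refine integrableOn_Ioi_of_isBigO_rpow (s := -(8 : ℝ) / 3) hcont ?_ (by norm_num)
  refine (isBigO_refSpeed_shift_sub.pow 2).congr' .rfl ?_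
  filter_upwards [eventually_ge_atTop 0] with t ht
  rw [← Real.rpow_natCast, ← Real.rpow_mul ht]
  norm_num

theorem integrableOn_deviationVel_Ioc_iff (hm : ∀ i, 0 < m i) (hγ : IsPrimitiveOn γ γ' 1 T) :
    IntegrableOn (fun t => minner m (deviationVel m b γ' t) (deviationVel m b γ' t)) (Ioc 1 T) ↔
      IntegrableOn (fun t => minner m (γ' t) (γ' t)) (Ioc 1 T) := by
  have hpos : Icc 1 T ⊆ Ioi 0 := fun t ht => one_pos.trans_le ht.1
  have hmeas : ∀ {f f' : ℝ → Conf d N}, IsPrimitiveOn f f' 1 T →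
      AEStronglyMeasurable f' (volume.restrict (Ioc 1 T)) := fun hf =>
    ((intervalIntegrable_iff_integrableOn_Ioc_of_le hγ.le).1
      hf.intervalIntegrable).aestronglyMeasurable
  refine integrableOn_minner_self_congr_of_sub hm (hmeas (isPrimitiveOn_deviation hγ))
    (hmeas hγ) ?_
  simp only [deviationVel, sub_sub_cancel_left, minner_neg_neg, minner_smul_left,
    minner_smul_right]
  have hs := (continuousOn_refSpeed (m := m) (b := b)).mono hpos
  exact ((hs.mul (hs.mul continuousOn_const)).integrableOn_Icc).mono_set Ioc_subset_Icc_self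

theorem integrableOn_deviationVel_Ioi_iff (hm : ∀ i, 0 < m i) (hh : 0 ≤ h)
    (hγ : ∀ T ≥ 1, IsPrimitiveOn γ γ' 1 T)
    (hγh : ∀ T ≥ 1, IsPrimitiveOn (timeShift h γ) (timeShift h γ') 1 T) :
    IntegrableOn (fun t => minner m (deviationVel m b γ' t) (deviationVel m b γ' t))
        (Ioi (1 + h)) ↔
      IntegrableOn (fun t => minner m (deviationVel m b (timeShift h γ') t)
        (deviationVel m b (timeShift h γ') t)) (Ioi 1) := by
  have hmeas := aestronglyMeasurable_Ioi_of_isPrimitiveOn fun T hT =>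
    isPrimitiveOn_deviation (m := m) (b := b) (hγ T hT)
  have hmeas_shift := (hmeas.mono_set
    (Ioi_subset_Ioi (le_add_of_nonneg_right hh))).comp_quasiMeasurePreserving
      (measurePreserving_add_right_Ioi 1 h).quasiMeasurePreserving
  have hsub : ∀ t, deviationVel m b γ' (t + h) - deviationVel m b (timeShift h γ') t =
      -((refSpeed m b (t + h) - refSpeed m b t) • b) := fun t => by
    simp only [deviationVel, timeShift, sub_smul]; abel
  rw [← integrableOn_Ioi_comp_add_right]
  refine integrableOn_minner_self_congr_of_sub hm hmeas_shift
    (aestronglyMeasurable_Ioi_of_isPrimitiveOn fun T hT => isPrimitiveOn_deviation (hγh T hT)) ?_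
  simp only [hsub, minner_neg_neg, minner_smul_left, minner_smul_right, ← mul_assoc, ← sq]
  exact (integrableOn_refSpeed_shift_sub_sq hh).mul_const _

theorem isParabolicCurve_iff_timeShift (hm : ∀ i, 0 < m i) (hh : 0 ≤ h) :
    IsParabolicCurve m b γ γ' ↔ IsSobolevArc m γ γ' 1 (1 + h) ∧
      IsParabolicCurve m b (timeShift h γ) (timeShift h γ') := by
  have h1 : (1 : ℝ) ≤ 1 + h := le_add_of_nonneg_right hh
  have hsplit := integrableOn_union (s := Ioc 1 (1 + h)) (t := Ioi (1 + h)) (μ := volume)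
    (f := fun t => minner m (deviationVel m b γ' t) (deviationVel m b γ' t))
  rw [Ioc_union_Ioi_eq_Ioi h1] at hsplit
  constructor
  · intro hγ
    have hprim : ∀ T ≥ 1, IsPrimitiveOn (timeShift h γ) (timeShift h γ') 1 T := fun T hT => by
      simpa using ((hγ.isPrimitiveOn (T + h) (by linarith)).mono h1
        (by linarith) le_rfl).comp_add_right h
    have hsq := hsplit.1 hγ.integrableOn_sq
    exact ⟨⟨fun t ht => hγ.mem t ht.1, hγ.isPrimitiveOn _ h1,
      (integrableOn_deviationVel_Ioc_iff hm (hγ.isPrimitiveOn _ h1)).1 hsq.1⟩,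
      fun t ht => hγ.mem _ (by linarith), hprim,
      (integrableOn_deviationVel_Ioi_iff hm hh hγ.isPrimitiveOn hprim).1 hsq.2⟩
  · rintro ⟨harc, hγh⟩
    have hprim : ∀ T ≥ 1, IsPrimitiveOn γ γ' 1 T := fun T hT => by
      have htail := (hγh.isPrimitiveOn T hT).comp_add_right (-h)
      simp only [timeShift, neg_add_cancel_right, sub_neg_eq_add] at htail
      exact (harc.isPrimitiveOn.trans htail).mono le_rfl hT (by linarith)
    refine ⟨fun t ht => ?_, hprim, hsplit.2
      ⟨(integrableOn_deviationVel_Ioc_iff hm harc.isPrimitiveOn).2 harc.integrableOn_sq,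
        (integrableOn_deviationVel_Ioi_iff hm hh hprim hγh.isPrimitiveOn).2 hγh.integrableOn_sq⟩⟩
    rcases le_total t (1 + h) with hth | hth
    · exact harc.mem t ⟨ht, hth⟩
    · simpa only [timeShift, sub_add_cancel] using hγh.mem (t - h) (by linarith)

theorem IsParabolicCurve.continuousOn_minner_deviation (hγ : IsParabolicCurve m b γ γ') :
    ContinuousOn (fun t => minner m b (deviation m b γ t)) (Ici 1) :=
  continuousOn_Ici_of_isPrimitiveOn fun T hT =>
    (isPrimitiveOn_deviation (hγ.isPrimitiveOn T hT)).minner_const_left b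

theorem IsParabolicCurve.isBigO_timeShift_sub (hm : ∀ i, 0 < m i) (hb : minner m b b = 1)
    (hγ : IsParabolicCurve m b γ γ') (h c s k : ℝ) :
    (fun t => c * (t + h) ^ s *
          (minner m b (deviation m b γ (t + h)) + k * refRadius m b (t + h)) -
        c * t ^ s * (minner m b (deviation m b (timeShift h γ) t) + k * refRadius m b t))
      =O[atTop] fun t => t ^ s := by
  have hr : refRadius m b =O[atTop] fun t => t := by
    refine (Asymptotics.isBigO_refl _ _).const_mul_left _ |>.trans (.of_bound 1 ?_)
    filter_upwards [eventually_ge_atTop 1] with t ht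
    rw [one_mul, Real.norm_of_nonneg (by positivity), Real.norm_of_nonneg (by positivity)]
    exact Real.rpow_le_self_of_one_le ht (by norm_num)
  have hrsub : (fun t => refRadius m b (t + h) - refRadius m b t) =O[atTop] fun _ => (1 : ℝ) := by
    have hdecay := tendsto_rpow_neg_atTop (y := (1 : ℝ) / 3) (by norm_num)
    refine (isBigO_const_mul_shift_sub _ _ h).trans ?_
    rw [show (2 : ℝ) / 3 - 1 = -(1 / 3) by norm_num]
    exact hdecay.isBigO_one ℝ
  have hconst : (fun _ => minner m b (γ (1 + h) - γ 1)) =O[atTop] fun _ : ℝ => (1 : ℝ) :=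
    Asymptotics.isBigO_const_const _ one_ne_zero _
  refine isBigO_rpow_mul_shift_sub
    (isBigO_id_comp_add_right ((hγ.isBigO_minner_deviation hm hb).add (hr.const_mul_left k)) h)
    (((hrsub.const_mul_left (k - 1)).add hconst).congr_left fun t => ?_) c s h
  have hradial : ∀ t, minner m b (parR0 m b t) = refRadius m b t := fun t => by
    rw [parR0, minner_smul_right, hb, mul_one, refRadius]
  simp only [deviation, timeShift, minner_sub_right, hradial]
  ring

theorem IsSobolevArc.integrableOn_renLagrangian_iff (hm : ∀ i, 0 < m i) (hU : 0 < U m b)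
    (hγ : IsSobolevArc m γ γ' 1 T) :
    IntegrableOn (renLagrangian m b γ γ') (Ioc 1 T) ↔
      IntegrableOn (fun t => U m (γ t)) (Ioc 1 T) := by
  have hpos : Icc 1 T ⊆ Ioi 0 := fun t ht => one_pos.trans_le ht.1
  have hcont : ContinuousOn (fun t => refAccel m b t *
      (minner m b (deviation m b γ t) - refRadius m b t)) (Icc 1 T) :=
    (continuousOn_refAccel.mono hpos).mul
      (((isPrimitiveOn_deviation hγ.isPrimitiveOn).minner_const_left b).continuousOn.sub
        (continuousOn_refRadius.mono hpos))
  have hrest := (((integrableOn_deviationVel_Ioc_iff (b := b) hm hγ.isPrimitiveOn).2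
    hγ.integrableOn_sq).div_const 2).sub (hcont.integrableOn_Icc.mono_set Ioc_subset_Icc_self)
  refine Iff.trans (integrableOn_congr_fun (fun t ht => ?_) measurableSet_Ioc)
    (integrable_add_iff_integrable_right' hrest)
  rw [renLagrangian_eq hm hU (hpos (Ioc_subset_Icc_self ht)), Pi.sub_apply]
  ring

theorem integrableOn_renLagrangian_Ioi_iff (hm : ∀ i, 0 < m i) (hb : IsMinCentral m b)
    (hh : 0 ≤ h) (hγ : IsParabolicCurve m b γ γ') :
    IntegrableOn (renLagrangian m b γ γ') (Ioi (1 + h)) ↔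
      IntegrableOn (renLagrangian m b (timeShift h γ) (timeShift h γ')) (Ioi 1) := by
  have hγh := ((isParabolicCurve_iff_timeShift hm hh).1 hγ).2
  have hsub : Ioi (1 + h) ⊆ Ioi 1 := Ioi_subset_Ioi (le_add_of_nonneg_right hh)
  have hkin := (((integrableOn_Ioi_comp_add_right _ 1 h).2
    (hγ.integrableOn_sq.mono_set hsub)).sub hγh.integrableOn_sq).div_const 2
  have hshift : MapsTo (fun t : ℝ => t + h) (Ici 1) (Ici 1) := fun t ht => by
    simp only [mem_Ici] at ht ⊢; linarith
  have hpos : Ici (1 : ℝ) ⊆ Ioi 0 := Ici_subset_Ioi.2 one_pos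
  have hcont : ∀ {ζ ζ' : ℝ → Conf d N}, IsParabolicCurve m b ζ ζ' →
      ContinuousOn (fun t => refAccel m b t *
        (minner m b (deviation m b ζ t) + -1 * refRadius m b t)) (Ici 1) := fun hζ =>
    (continuousOn_refAccel.mono hpos).mul (hζ.continuousOn_minner_deviation.add
      (continuousOn_const.mul (continuousOn_refRadius.mono hpos)))
  have hacc := integrableOn_Ioi_of_isBigO_rpow
    (((hcont hγ).comp (by fun_prop) hshift).sub (hcont hγh))
    (hγ.isBigO_timeShift_sub hm hb.2.2.1 h _ _ (-1)) (by norm_num)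
  rw [← integrableOn_Ioi_comp_add_right]
  refine Iff.trans (integrableOn_congr_fun (fun t ht => ?_) measurableSet_Ioi)
    (integrable_add_iff_integrable_right' (hkin.sub hacc))
  have ht : (1 : ℝ) < t := ht
  have hU := hb.U_pos hm
  rw [renLagrangian_eq hm hU (by linarith), renLagrangian_eq hm hU (by linarith)]
  simp only [Pi.sub_apply, Function.comp_apply]
  ring

theorem isAdmissibleCurve_iff_timeShift (hm : ∀ i, 0 < m i) (hb : IsMinCentral m b)
    (hh : 0 ≤ h) :
    IsAdmissibleCurve m b γ γ' ↔ IsFiniteActionArc m γ γ' 1 (1 + h) ∧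
      IsAdmissibleCurve m b (timeShift h γ) (timeShift h γ') := by
  have hU := hb.U_pos hm
  have hunion := Ioc_union_Ioi_eq_Ioi (le_add_of_nonneg_right hh : (1 : ℝ) ≤ 1 + h)
  have hint := integrableOn_union (s := Ioc 1 (1 + h)) (t := Ioi (1 + h)) (μ := volume)
    (f := renLagrangian m b γ γ')
  have hae := ae_restrict_union_iff (μ := volume) (Ioc 1 (1 + h)) (Ioi (1 + h))
    fun t => ¬ collision (γ t)
  rw [hunion] at hint hae
  rw [← ae_restrict_Ioi_comp_add_right] at hae
  constructor
  · intro hγ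
    obtain ⟨harc, htail⟩ := (isParabolicCurve_iff_timeShift hm hh).1 hγ.toIsParabolicCurve
    have hren := hint.1 hγ.integrableOn_renLagrangian
    have hcol := hae.1 hγ.ae_not_collision
    exact ⟨⟨harc, (harc.integrableOn_renLagrangian_iff hm hU).1 hren.1, hcol.1⟩, htail,
      (integrableOn_renLagrangian_Ioi_iff hm hb hh hγ.toIsParabolicCurve).1 hren.2, hcol.2⟩
  · rintro ⟨harc, htail⟩
    have hγ := (isParabolicCurve_iff_timeShift hm hh).2
      ⟨harc.toIsSobolevArc, htail.toIsParabolicCurve⟩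
    exact ⟨hγ, hint.2 ⟨(harc.integrableOn_renLagrangian_iff hm hU).2 harc.integrableOn_U,
      (integrableOn_renLagrangian_Ioi_iff hm hb hh hγ).2 htail.integrableOn_renLagrangian⟩,
      hae.2 ⟨harc.ae_not_collision, htail.ae_not_collision⟩⟩

theorem IsFiniteActionArc.intervalIntegrable_lagrangian {c c' : ℝ → Conf d N} {s u : ℝ}
    (hc : IsFiniteActionArc m c c' s u) : IntervalIntegrable (lagrangian m c c') volume s u :=
  (intervalIntegrable_iff_integrableOn_Ioc_of_le hc.isPrimitiveOn.le).2
    ((hc.integrableOn_sq.div_const 2).add hc.integrableOn_U)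

theorem IsAdmissibleCurve.isFiniteActionArc (hm : ∀ i, 0 < m i) (hb : IsMinCentral m b)
    (hγ : IsAdmissibleCurve m b γ γ') (hT : 1 ≤ T) : IsFiniteActionArc m γ γ' 1 T := by
  simpa using ((isAdmissibleCurve_iff_timeShift hm hb (sub_nonneg.2 hT)).1 hγ).1

theorem IsAdmissibleCurve.tendsto_integral_renLagrangian (hγ : IsAdmissibleCurve m b γ γ') :
    Tendsto (fun T => ∫ t in (1 : ℝ)..T, renLagrangian m b γ γ' t) atTop
      (𝓝 (renAction m b γ γ')) :=
  intervalIntegral_tendsto_integral_Ioi 1 hγ.integrableOn_renLagrangian tendsto_id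

theorem IsAdmissibleCurve.integral_renLagrangian (hm : ∀ i, 0 < m i) (hb : IsMinCentral m b)
    (hγ : IsAdmissibleCurve m b γ γ') (hT : 1 ≤ T) :
    ∫ t in (1 : ℝ)..T, renLagrangian m b γ γ' t = (∫ t in (1 : ℝ)..T, lagrangian m γ γ' t) -
      (refSpeed m b T * (minner m b (deviation m b γ T) + 2 * refRadius m b T) -
        refSpeed m b 1 * (2 * refRadius m b 1)) :=
  NBodyHJ.integral_renLagrangian hm hb (hγ.isPrimitiveOn T hT)
    ((intervalIntegrable_iff_integrableOn_Ioc_of_le hT).2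
      (hγ.integrableOn_renLagrangian.mono_set Ioc_subset_Ioi_self))

/-- Dynamic programming along one curve: the boundary terms of `integral_renLagrangian` at
`T + h` for `γ` and at `T` for its time shift cancel as `T → ∞`. -/
theorem IsAdmissibleCurve.renAction_eq_add_timeShift (hm : ∀ i, 0 < m i)
    (hb : IsMinCentral m b) (hh : 0 ≤ h) (hγ : IsAdmissibleCurve m b γ γ') :
    renAction m b γ γ' = (∫ t in (1 : ℝ)..(1 + h), lagrangian m γ γ' t) +
      renAction m b (timeShift h γ) (timeShift h γ') := by
  have hγh := ((isAdmissibleCurve_iff_timeShift hm hb hh).1 hγ).2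
  have hlim := (hγ.tendsto_integral_renLagrangian.comp
    (tendsto_atTop_add_const_right _ h tendsto_id)).sub hγh.tendsto_integral_renLagrangian
  have hbdry := (hγ.toIsParabolicCurve.isBigO_timeShift_sub hm hb.2.2.1 h
    (beta m b * (2 / 3)) (-(1 : ℝ) / 3) 2).trans_tendsto (by
      simpa only [neg_div] using tendsto_rpow_neg_atTop (y := (1 : ℝ) / 3) (by norm_num))
  have hlim' := (tendsto_const_nhds (x := ∫ t in (1 : ℝ)..(1 + h), lagrangian m γ γ' t)).sub hbdry
  rw [sub_zero] at hlim'
  have heq := tendsto_nhds_unique (hlim.congr' ?_) hlim'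
  · linarith
  filter_upwards [eventually_ge_atTop 1] with T hT
  have hi : ∀ S ≥ 1, IntervalIntegrable (lagrangian m γ γ') volume 1 S := fun S hS =>
    (hγ.isFiniteActionArc hm hb hS).intervalIntegrable_lagrangian
  have hhead := hi (1 + h) (by linarith)
  have hadd := intervalIntegral.integral_add_adjacent_intervals hhead
    (hhead.symm.trans (hi (T + h) (by linarith)))
  have hshift := intervalIntegral.integral_comp_add_right (a := 1) (b := T) (lagrangian m γ γ') h
  simp only [Function.comp_apply, id]
  rw [hγ.integral_renLagrangian hm hb (by linarith), hγh.integral_renLagrangian hm hb hT, ← hadd,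
    ← hshift]
  simp only [lagrangian, refSpeed, timeShift]
  ring

end Cutting

/-! ### Coercivity of the renormalized action -/

section LowerBound

variable {m : Fin N → ℝ} {b x : Conf d N} {γ γ' w w' : ℝ → Conf d N} {t T : ℝ}

/-- The defect is `u (s - r)² (s + 2 r) / (2 r³ s)`. -/
theorem kepler_lower_bound {u r s q c : ℝ} (hu : 0 ≤ u) (hr : 0 < r) (hs : 0 < s)
    (hsq : s ^ 2 = r ^ 2 + 2 * r * c + q) :
    -(u / (2 * r ^ 3) * q) ≤ u / s - u / r + u / r ^ 2 * c := by
  obtain rfl : q = s ^ 2 - r ^ 2 - 2 * r * c := by linarith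
  have hdefect : u / s - u / r + u / r ^ 2 * c + u / (2 * r ^ 3) * (s ^ 2 - r ^ 2 - 2 * r * c) =
      u * ((s - r) ^ 2 * (s + 2 * r)) / (2 * r ^ 3 * s) := by
    field_simp
    ring
  have : 0 ≤ u * ((s - r) ^ 2 * (s + 2 * r)) / (2 * r ^ 3 * s) := by positivity
  linarith

theorem IsMinCentral.neg_minner_sub_self_div_le (hm : ∀ i, 0 < m i) (hb : IsMinCentral m b)
    (hx : inOmega m x) (ht : 0 < t) :
    -(minner m (x - parR0 m b t) (x - parR0 m b t) / (9 * t ^ 2)) ≤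
      U m x - U m (parR0 m b t) - refAccel m b t * minner m b (x - parR0 m b t) := by
  have := hb.nontrivial hm
  have hU := hb.U_pos hm
  have hr := refRadius_pos hU ht
  have hR0 : parR0 m b t = refRadius m b t • b := rfl
  have hkepler := kepler_lower_bound hU.le hr (mnorm_pos hm (ne_zero_of_not_collision hx.2))
    (q := minner m (x - parR0 m b t) (x - parR0 m b t)) (c := minner m b (x - parR0 m b t)) (by
      simp only [mnorm_sq hm, hR0, minner_sub_left, minner_sub_right, minner_smul_left,
        minner_smul_right, hb.2.2.1, minner_comm x b]
      ring)
  have hcoeff : U m b / (2 * refRadius m b t ^ 3) = 1 / (9 * t ^ 2) := by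
    rw [refRadius_pow_three hm ht]
    field_simp
  rw [hcoeff, one_div_mul_eq_div] at hkepler
  rw [U_parR0 hU ht, refAccel_eq_neg_div_sq hm hU ht]
  linarith [hb.div_mnorm_le_U hm hx]

theorem IsMinCentral.le_renLagrangian (hm : ∀ i, 0 < m i) (hb : IsMinCentral m b)
    (hγ : inOmega m (γ t)) (ht : 0 < t) :
    minner m (deviationVel m b γ' t) (deviationVel m b γ' t) / 2 -
          minner m (γ t - parR0 m b t) (γ t - parR0 m b t) / (9 * t ^ 2) +
        refAccel m b t * minner m b (γ 1 - beta m b • b) ≤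
      renLagrangian m b γ γ' t := by
  have hpot := hb.neg_minner_sub_self_div_le hm hγ ht
  rw [renLagrangian, parIntegrand, parCurve_deviation, mnorm_sq hm,
    show parR0'' m b t = refAccel m b t • b from rfl, minner_smul_left, deviation,
    minner_sub_right b (γ t - parR0 m b t)]
  linarith

/-- Hardy's inequality with an initial value: compare with the derivative of `|w|² / (6 t)`. -/
theorem neg_minner_self_div_six_le_integral (hm : ∀ i, 0 < m i) (hw : IsPrimitiveOn w w' 1 T)
    (hi : IntervalIntegrable (fun t => minner m (w' t) (w' t)) volume 1 T) :
    -(minner m (w 1) (w 1) / 6) ≤ ∫ t in (1 : ℝ)..T,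
      (minner m (w' t) (w' t) / 2 - minner m (w t) (w t) / (9 * t ^ 2)) := by
  have hT := hw.le
  have hpos : ∀ t ∈ Icc 1 T, 0 < t := fun t ht => one_pos.trans_le ht.1
  have hcont : ContinuousOn (fun t : ℝ => -(6 * t ^ 2)⁻¹) (Icc 1 T) :=
    (ContinuousOn.inv₀ (by fun_prop) fun t ht => by have := hpos t ht; positivity).neg
  have hinv : IsPrimitiveOn (fun t : ℝ => (6 * t)⁻¹) (fun t => -(6 * t ^ 2)⁻¹) 1 T := by
    refine .of_hasDerivAt hT (fun t ht => ?_) hcont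
    have ht0 := (hpos t ht).ne'
    refine (((hasDerivAt_id t).const_mul 6).fun_inv (by simpa using ht0)).congr_deriv ?_
    simp only [id]
    field_simp
  have hprod := (hw.minner_apply (m := m) hw).mul hinv
  have hright : IntervalIntegrable (fun t => minner m (w' t) (w' t) / 2 -
      minner m (w t) (w t) / (9 * t ^ 2)) volume 1 T := by
    refine (hi.div_const 2).sub (ContinuousOn.intervalIntegrable_of_Icc hT ?_)
    exact (hw.minner_apply hw).continuousOn.div (by fun_prop) fun t ht => by
      have := hpos t ht; positivity
  calc -(minner m (w 1) (w 1) / 6)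
      ≤ minner m (w T) (w T) * (6 * T)⁻¹ - minner m (w 1) (w 1) * (6 * 1)⁻¹ := by
        have : 0 ≤ minner m (w T) (w T) * (6 * T)⁻¹ :=
          mul_nonneg (minner_self_nonneg hm _) (by positivity)
        linarith
    _ = _ := hprod.integral_eq_sub.symm
    _ ≤ _ := intervalIntegral.integral_mono_on hT hprod.intervalIntegrable hright fun t ht => by
        have ht0 := hpos t ht
        have hsq := minner_self_nonneg hm (w' t - (3 * t)⁻¹ • w t)
        simp only [minner_sub_left, minner_sub_right, minner_smul_left, minner_smul_right,
          minner_comm (w t) (w' t)] at hsq ⊢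
        rw [← sub_nonneg]
        refine (div_nonneg hsq zero_le_two).trans_eq ?_
        field_simp
        ring

theorem IsAdmissibleCurve.neg_minner_div_six_le_integral_renLagrangian (hm : ∀ i, 0 < m i)
    (hb : IsMinCentral m b) (hγ : IsAdmissibleCurve m b γ γ') (hT : 1 ≤ T) :
    -(minner m (γ 1 - beta m b • b) (γ 1 - beta m b • b) / 6) +
        (refSpeed m b T - refSpeed m b 1) * minner m b (γ 1 - beta m b • b) ≤
      ∫ t in (1 : ℝ)..T, renLagrangian m b γ γ' t := by
  have hw : IsPrimitiveOn (fun t => γ t - parR0 m b t) (deviationVel m b γ') 1 T :=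
    (hγ.isPrimitiveOn T hT).sub (isPrimitiveOn_parR0 hT)
  have hsq : IntervalIntegrable
      (fun t => minner m (deviationVel m b γ' t) (deviationVel m b γ' t)) volume 1 T :=
    (intervalIntegrable_iff_integrableOn_Ioc_of_le hT).2
      (hγ.integrableOn_sq.mono_set Ioc_subset_Ioi_self)
  have hren := (intervalIntegrable_iff_integrableOn_Ioc_of_le hT).2
    (hγ.integrableOn_renLagrangian.mono_set Ioc_subset_Ioi_self)
  have hacc := isPrimitiveOn_refSpeed (m := m) (b := b) hT
  have hhardy := neg_minner_self_div_six_le_integral hm hw hsq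
  have hquad : IntervalIntegrable (fun t => minner m (γ t - parR0 m b t) (γ t - parR0 m b t) /
      (9 * t ^ 2)) volume 1 T := by
    refine ContinuousOn.intervalIntegrable_of_Icc hT ?_
    exact (hw.minner_apply hw).continuousOn.div (by fun_prop) fun t ht => by
      have := one_pos.trans_le ht.1; positivity
  have hkin := (hsq.div_const 2).sub hquad
  have hadd := intervalIntegral.integral_add hkin (hacc.intervalIntegrable.mul_const
    (minner m b (γ 1 - beta m b • b)))
  rw [intervalIntegral.integral_mul_const, hacc.integral_eq_sub] at hadd
  rw [parR0_one] at hhardy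
  refine (add_le_add_left hhardy _).trans (hadd.symm.trans_le ?_)
  refine intervalIntegral.integral_mono_ae_restrict hT
    (hkin.add (hacc.intervalIntegrable.mul_const _)) hren ?_
  rw [← restrict_Ioc_eq_restrict_Icc]
  filter_upwards [ae_restrict_of_ae_restrict_of_subset Ioc_subset_Ioi_self hγ.ae_not_collision,
    ae_restrict_mem measurableSet_Ioc] with t hcol ht
  have ht0 : 0 < t := one_pos.trans ht.1
  exact hb.le_renLagrangian hm ⟨hγ.mem t ht.1.le, hcol⟩ ht0

theorem IsAdmissibleCurve.le_renAction (hm : ∀ i, 0 < m i) (hb : IsMinCentral m b)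
    (hγ : IsAdmissibleCurve m b γ γ') :
    -((1 + beta m b) * (1 + minner m (γ 1 - beta m b • b) (γ 1 - beta m b • b))) ≤
      renAction m b γ γ' := by
  have hβ := beta_nonneg (b := b) hm
  set z := γ 1 - beta m b • b
  refine ge_of_tendsto hγ.tendsto_integral_renLagrangian ?_
  filter_upwards [eventually_ge_atTop 1] with T hT
  refine le_trans ?_ (hγ.neg_minner_div_six_le_integral_renLagrangian hm hb hT)
  have hspeed : |refSpeed m b T - refSpeed m b 1| ≤ beta m b := by
    have hpow := Real.rpow_le_one_of_one_le_of_nonpos hT (show -(1 : ℝ) / 3 ≤ 0 by norm_num)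
    have hpow' := Real.rpow_nonneg (zero_le_one.trans hT) (-(1 : ℝ) / 3)
    simp only [refSpeed, Real.one_rpow]
    rw [abs_le]
    constructor <;> nlinarith
  have hbz := two_mul_abs_minner_le hm b z
  rw [hb.2.2.1] at hbz
  have hprod := abs_mul (refSpeed m b T - refSpeed m b 1) (minner m b z)
  have hle := mul_le_mul_of_nonneg_right hspeed (abs_nonneg (minner m b z))
  have := neg_abs_le ((refSpeed m b T - refSpeed m b 1) * minner m b z)
  nlinarith [minner_self_nonneg hm z, mul_le_mul_of_nonneg_left hbz hβ]

end LowerBound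

/-! ### Concatenation and motions through total collision -/

section Concatenation

variable {m : Fin N → ℝ} {b x z : Conf d N} {c c' γ γ' ζ ζ' : ℝ → Conf d N} {s u h : ℝ}

theorem IsFiniteActionArc.congr (hc : IsFiniteActionArc m c c' s u) (h : EqOn γ c (Icc s u))
    (h' : EqOn γ' c' (Ioc s u)) : IsFiniteActionArc m γ γ' s u where
  mem t ht := h ht ▸ hc.mem t ht
  isPrimitiveOn := hc.isPrimitiveOn.congr h h'
  integrableOn_sq := hc.integrableOn_sq.congr_fun (fun t ht => by simp only [h' ht])
    measurableSet_Ioc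
  integrableOn_U := hc.integrableOn_U.congr_fun
    (fun t ht => by simp only [h (Ioc_subset_Icc_self ht)]) measurableSet_Ioc
  ae_not_collision := by
    filter_upwards [hc.ae_not_collision, ae_restrict_mem measurableSet_Ioc] with t hcol ht
    rwa [h (Ioc_subset_Icc_self ht)]

theorem eqOn_renLagrangian (h : EqOn ζ γ (Ici 1)) (h' : EqOn ζ' γ' (Ioi 1)) :
    EqOn (renLagrangian m b ζ ζ') (renLagrangian m b γ γ') (Ioi 1) := fun t ht => by
  simp only [renLagrangian, parIntegrand, parCurve, deviation, deviationVel,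
    h (Ioi_subset_Ici_self ht), h self_mem_Ici, h' ht]

theorem renAction_congr (h : EqOn ζ γ (Ici 1)) (h' : EqOn ζ' γ' (Ioi 1)) :
    renAction m b ζ ζ' = renAction m b γ γ' :=
  setIntegral_congr_fun measurableSet_Ioi (eqOn_renLagrangian h h')

theorem IsAdmissibleCurve.congr (hγ : IsAdmissibleCurve m b γ γ') (h : EqOn ζ γ (Ici 1))
    (h' : EqOn ζ' γ' (Ioi 1)) : IsAdmissibleCurve m b ζ ζ' where
  mem t ht := h ht ▸ hγ.mem t ht
  isPrimitiveOn T hT := (hγ.isPrimitiveOn T hT).congr (h.mono Icc_subset_Ici_self)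
    (h'.mono Ioc_subset_Ioi_self)
  integrableOn_sq := hγ.integrableOn_sq.congr_fun
    (fun t ht => by simp only [deviationVel, h' ht]) measurableSet_Ioi
  integrableOn_renLagrangian := hγ.integrableOn_renLagrangian.congr_fun
    (eqOn_renLagrangian h h').symm measurableSet_Ioi
  ae_not_collision := by
    filter_upwards [hγ.ae_not_collision, ae_restrict_mem measurableSet_Ioi] with t hcol ht
    rwa [h (Ioi_subset_Ici_self ht)]

/-- The motion that follows `c` up to time `1 + h` and then `γ`, started at its time `1`. It is
applied to positions and to velocities. -/
def concatenate (h : ℝ) (c γ : ℝ → Conf d N) : ℝ → Conf d N :=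
  (Iic (1 + h)).piecewise c (timeShift (-h) γ)

theorem eqOn_concatenate : EqOn (concatenate h c γ) c (Iic (1 + h)) :=
  piecewise_eqOn _ _ _

theorem eqOn_timeShift_concatenate : EqOn (timeShift h (concatenate h c γ)) γ (Ioi 1) :=
  fun t ht => by
    have ht : 1 < t := ht
    have hmem : t + h ∉ Iic (1 + h) := by simpa using ht
    simp [timeShift, concatenate, piecewise_eq_of_notMem _ _ _ hmem]

theorem eqOn_timeShift_concatenate_of_eq (hcγ : c (1 + h) = γ 1) :
    EqOn (timeShift h (concatenate h c γ)) γ (Ici 1) := by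
  rw [← Ioi_insert]
  rintro t (rfl | ht)
  exacts [(eqOn_concatenate self_mem_Iic).trans hcγ, eqOn_timeShift_concatenate ht]

theorem IsFiniteActionArc.isAdmissibleCurve_concatenate (hm : ∀ i, 0 < m i)
    (hb : IsMinCentral m b) (hc : IsFiniteActionArc m c c' 1 (1 + h))
    (hγ : IsAdmissibleCurve m b γ γ') (hcγ : c (1 + h) = γ 1) :
    IsAdmissibleCurve m b (concatenate h c γ) (concatenate h c' γ') :=
  (isAdmissibleCurve_iff_timeShift hm hb (by linarith [hc.isPrimitiveOn.le])).2
    ⟨hc.congr (eqOn_concatenate.mono fun _ ht => ht.2) (eqOn_concatenate.mono fun _ ht => ht.2),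
      hγ.congr (eqOn_timeShift_concatenate_of_eq hcγ) eqOn_timeShift_concatenate⟩

theorem IsFiniteActionArc.renAction_concatenate (hm : ∀ i, 0 < m i)
    (hb : IsMinCentral m b) (hc : IsFiniteActionArc m c c' 1 (1 + h))
    (hγ : IsAdmissibleCurve m b γ γ') (hcγ : c (1 + h) = γ 1) :
    renAction m b (concatenate h c γ) (concatenate h c' γ') =
      (∫ t in (1 : ℝ)..(1 + h), lagrangian m c c' t) + renAction m b γ γ' := by
  have h1 := hc.isPrimitiveOn.le
  rw [(hc.isAdmissibleCurve_concatenate hm hb hγ hcγ).renAction_eq_add_timeShift hm hb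
    (by linarith), renAction_congr (eqOn_timeShift_concatenate_of_eq hcγ)
      eqOn_timeShift_concatenate]
  congr 1
  refine intervalIntegral.integral_congr fun t ht => ?_
  rw [uIcc_of_le h1] at ht
  simp only [lagrangian, eqOn_concatenate (c := c) (γ := γ) ht.2,
    eqOn_concatenate (c := c') (γ := γ') ht.2]

theorem IsFiniteActionArc.reverse (hc : IsFiniteActionArc m c c' s u) (h : ℝ) :
    IsFiniteActionArc m (fun t => c (h - t)) (fun t => -c' (h - t)) (h - u) (h - s) := by
  have hsu := hc.isPrimitiveOn.le
  have hint : ∀ {f : ℝ → ℝ}, IntegrableOn f (Ioc s u) →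
      IntegrableOn (fun t => f (h - t)) (Ioc (h - u) (h - s)) := fun hf =>
    (intervalIntegrable_iff_integrableOn_Ioc_of_le (by linarith)).1
      (((intervalIntegrable_iff_integrableOn_Ioc_of_le hsu).2 hf).comp_sub_left h).symm
  refine ⟨⟨fun t ht => hc.mem _ ⟨by linarith [ht.2], by linarith [ht.1]⟩,
    hc.isPrimitiveOn.comp_sub_left h, ?_⟩, hint hc.integrableOn_U, ?_⟩
  · simp only [minner_neg_neg]
    exact hint hc.integrableOn_sq
  · have hmp := (volume.measurePreserving_sub_left h).restrict_preimage
      (measurableSet_Ioc (a := s) (b := u))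
    rw [preimage_const_sub_Ioc] at hmp
    rw [← restrict_Ico_eq_restrict_Ioc]
    exact hmp.quasiMeasurePreserving.ae hc.ae_not_collision

theorem isFiniteActionArc_ejection (hz : inOmega m z) :
    IsFiniteActionArc m (fun t => t ^ ((2 : ℝ) / 3) • z)
      (fun t => (2 / 3 * t ^ (-(1 : ℝ) / 3)) • z) 0 1 := by
  have hint : ∀ r : ℝ, -1 < r → IntegrableOn (fun t : ℝ => t ^ r) (Ioc 0 1) := fun r hr =>
    (intervalIntegrable_iff_integrableOn_Ioc_of_le zero_le_one).1
      (intervalIntegral.intervalIntegrable_rpow' hr)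
  have hprim : IsPrimitiveOn (fun t : ℝ => t ^ ((2 : ℝ) / 3))
      (fun t => 2 / 3 * t ^ (-(1 : ℝ) / 3)) 0 1 := by
    refine .of_hasDerivAt_Ioo zero_le_one
      (continuousOn_id.rpow_const fun _ _ => Or.inr (by norm_num)) (fun t ht => ?_)
      ((intervalIntegrable_iff_integrableOn_Ioc_of_le zero_le_one).2
        ((hint _ (by norm_num)).const_mul _))
    refine (Real.hasDerivAt_rpow_const (p := (2 : ℝ) / 3) (Or.inl ht.1.ne')).congr_deriv ?_
    rw [show (2 : ℝ) / 3 - 1 = -1 / 3 by norm_num]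
  refine ⟨⟨fun t _ => hz.1.smul _,
    hprim.clm_apply ((ContinuousLinearMap.id ℝ ℝ).smulRight z), ?_⟩, ?_, ?_⟩
  · refine IntegrableOn.congr_fun
      ((hint (-(2 : ℝ) / 3) (by norm_num)).const_mul (4 / 9 * minner m z z)) (fun t ht => ?_)
      measurableSet_Ioc
    have hsq : t ^ (-(2 : ℝ) / 3) = (t ^ (-(1 : ℝ) / 3)) ^ 2 := by
      rw [← Real.rpow_natCast, ← Real.rpow_mul ht.1.le]
      norm_num
    simp only [minner_smul_left, minner_smul_right, hsq]
    ring
  · refine IntegrableOn.congr_fun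
      ((hint (-(2 : ℝ) / 3) (by norm_num)).const_mul (U m z)) (fun t ht => ?_) measurableSet_Ioc
    simp only [U_smul (Real.rpow_nonneg ht.1.le _), neg_div, Real.rpow_neg ht.1.le]
    rfl
  · filter_upwards [ae_restrict_mem measurableSet_Ioc] with t ht
    exact not_collision_smul hz.2 (Real.rpow_pos_of_pos ht.1 _).ne'

theorem isAdmissibleCurve_parR0 (hm : ∀ i, 0 < m i) (hb : IsMinCentral m b) :
    IsAdmissibleCurve m b (parR0 m b) (fun t => refSpeed m b t • b) := by
  have hU := hb.U_pos hm
  have hdev : ∀ t, deviation m b (parR0 m b) t = 0 := fun t => by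
    simp [deviation, parR0_one]
  refine ⟨⟨fun t _ => hb.1.smul _, fun T hT => isPrimitiveOn_parR0 hT, ?_⟩, ?_, ?_⟩
  · simp [deviationVel, minner_zero_right]
  · refine integrableOn_zero.congr_fun (fun t _ => ?_) measurableSet_Ioi
    simp [renLagrangian, parIntegrand, parCurve_deviation, hdev, deviationVel, mnorm,
      minner_zero_right]
  · filter_upwards [ae_restrict_mem measurableSet_Ioi] with t ht
    exact not_collision_smul hb.2.1 (refRadius_pos hU (one_pos.trans ht)).ne'

/-- Collapse homothetically from `x` to total collision, then eject to the reference motion. -/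
theorem exists_isAdmissibleCurve (hm : ∀ i, 0 < m i) (hb : IsMinCentral m b)
    (hx : inOmega m x) : ∃ γ γ', γ 1 = x ∧ IsAdmissibleCurve m b γ γ' := by
  have hβ : inOmega m (beta m b • b) :=
    ⟨hb.1.smul _, not_collision_smul hb.2.1 (beta_pos (hb.U_pos hm)).ne'⟩
  have hcollapse : IsFiniteActionArc m (fun t => (2 - t) ^ ((2 : ℝ) / 3) • x)
      (fun t => -((2 / 3 * (2 - t) ^ (-(1 : ℝ) / 3)) • x)) 1 (1 + 1) := by
    convert (isFiniteActionArc_ejection hx).reverse 2 using 1 <;> norm_num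
  have heject : IsFiniteActionArc m (fun t => (t - 1) ^ ((2 : ℝ) / 3) • beta m b • b)
      (fun t => (2 / 3 * (t - 1) ^ (-(1 : ℝ) / 3)) • beta m b • b) 1 (1 + 1) := by
    convert ((isFiniteActionArc_ejection hβ).reverse 2).reverse 3 using 1 <;> ring_nf
    simp only [neg_neg]
  have hγ := heject.isAdmissibleCurve_concatenate hm hb (isAdmissibleCurve_parR0 hm hb)
    (by norm_num [parR0_one])
  refine ⟨_, _, ?_, hcollapse.isAdmissibleCurve_concatenate hm hb hγ ?_⟩
  · rw [eqOn_concatenate (by norm_num)]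
    norm_num
  · rw [eqOn_concatenate (by norm_num)]
    norm_num

end Concatenation

/-! ### Viscosity inequalities for dominated and calibrated functions -/

section Viscosity

variable {m : Fin N → ℝ} {v : Conf d N → ℝ} {x z p : Conf d N} {c c' : ℝ → Conf d N}
  {a s t h C ε : ℝ}

theorem le_of_forall_pos_le_of_continuousAt {f : ℝ → ℝ} (hf : ContinuousAt f 0)
    (h : ∀ ε > 0, a ≤ f ε) : a ≤ f 0 :=
  ge_of_tendsto (hf.tendsto.mono_left (nhdsWithin_le_nhds (s := Ioi 0)))
    (eventually_nhdsWithin_of_forall h)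

theorem isFiniteActionArc_segment (hx : inX m x) (hz : inX m z) (hh : 0 ≤ h)
    (hcol : ∀ r ∈ Icc 0 h, ¬ collision (x + r • z)) :
    IsFiniteActionArc m (fun t => x + (t - 1) • z) (fun _ => z) 1 (1 + h) := by
  have hcol' : ∀ t ∈ Icc 1 (1 + h), ¬ collision (x + (t - 1) • z) := fun t ht =>
    hcol _ ⟨by linarith [ht.1], by linarith [ht.2]⟩
  have hcont : Continuous fun t : ℝ => x + (t - 1) • z := by fun_prop
  refine ⟨⟨fun t _ => hx.add (hz.smul _), ?_, integrableOn_const (by simp)⟩, ?_, ?_⟩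
  · refine .of_hasDerivAt (le_add_of_nonneg_right hh) (fun t _ => ?_) continuousOn_const
    simpa using (((hasDerivAt_id t).sub_const 1).smul_const z).const_add x
  · exact (ContinuousOn.integrableOn_Icc fun t ht => ((continuousAt_U (hcol' t ht)).comp
      (f := fun t => x + (t - 1) • z) hcont.continuousAt).continuousWithinAt).mono_set
      Ioc_subset_Icc_self
  · filter_upwards [ae_restrict_mem measurableSet_Ioc] with t ht
    exact hcol' t (Ioc_subset_Icc_self ht)

/-- The functions dominated by the Lagrangian action on arcs that end in `Ω`. This is the weak KAM
notion of a subsolution of the Hamilton–Jacobi equation. -/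
def IsDominated (m : Fin N → ℝ) (v : Conf d N → ℝ) : Prop :=
  ∀ ⦃c c' : ℝ → Conf d N⦄ ⦃h : ℝ⦄, IsFiniteActionArc m c c' 1 (1 + h) → inOmega m (c (1 + h)) →
    v (c 1) ≤ (∫ t in (1 : ℝ)..(1 + h), lagrangian m c c' t) + v (c (1 + h))

theorem IsDominated.le_add_of_segment (hv : IsDominated m v) (hx : inX m x) (hz : inX m z)
    (hh : 0 ≤ h) (hseg : ∀ r ∈ Icc 0 h, ¬ collision (x + r • z) ∧ U m (x + r • z) ≤ C) :
    v x ≤ h * (minner m z z / 2 + C) + v (x + h • z) := by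
  have h1 : (1 : ℝ) ≤ 1 + h := le_add_of_nonneg_right hh
  have harc := isFiniteActionArc_segment hx hz hh fun r hr => (hseg r hr).1
  have hdom := hv harc (by
    simpa using ⟨hx.add (hz.smul h), (hseg h (right_mem_Icc.2 hh)).1⟩)
  have haction := intervalIntegral.integral_mono_on h1 harc.intervalIntegrable_lagrangian
    (intervalIntegrable_const (c := minner m z z / 2 + C)) fun t ht =>
      add_le_add_right (hseg (t - 1) ⟨by linarith [ht.1], by linarith [ht.2]⟩).2 _
  rw [intervalIntegral.integral_const, smul_eq_mul, add_sub_cancel_left] at haction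
  simp only [sub_self, zero_smul, add_zero, add_sub_cancel_left] at hdom
  linarith

theorem IsDominated.neg_minner_le_of_inSuperdiff (hm : ∀ i, 0 < m i) (hv : IsDominated m v)
    (hx : inOmega m x) (hz : inX m z) (hp : InSuperdiff m v x p) :
    -minner m p z ≤ minner m z z / 2 + U m x := by
  rcases eq_or_ne z 0 with rfl | hz0
  · simpa [minner_zero_right] using U_nonneg hm x
  suffices ∀ ε > 0, -minner m p z ≤ minner m z z / 2 + (U m x + ε) + ε * mnorm m z by
    simpa using le_of_forall_pos_le_of_continuousAt (by fun_prop) this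
  intro ε hε
  have hray : Tendsto (fun r : ℝ => x + r • z) (𝓝 0) (𝓝 x) := by
    simpa using (by fun_prop : Continuous fun r : ℝ => x + r • z).tendsto 0
  have hgood : ∀ᶠ y in 𝓝 x, ¬ collision y ∧ U m y ≤ U m x + ε :=
    (isOpen_not_collision.eventually_mem hx.2).and
      ((continuousAt_U hx.2).eventually_le_const (lt_add_of_pos_right _ hε))
  have hray_punctured : Tendsto (fun r : ℝ => x + r • z) (𝓝[>] 0) (𝓝[setX m \ {x}] x) := by
    refine tendsto_nhdsWithin_iff.2 ⟨hray.mono_left nhdsWithin_le_nhds, ?_⟩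
    filter_upwards [self_mem_nhdsWithin] with r hr
    exact ⟨hx.1.add (hz.smul r), by simp [hz0, (ne_of_gt hr : r ≠ 0)]⟩
  obtain ⟨δ, hδ, hseg⟩ := Metric.eventually_nhds_iff.1 (hray.eventually hgood)
  obtain ⟨h, hsup, hh, hhδ⟩ :=
    ((hray_punctured.eventually (hp ε hε)).and (Ioo_mem_nhdsGT hδ)).exists
  have hdom := hv.le_add_of_segment hx.1 hz hh.le fun r hr =>
    hseg (by rw [Real.dist_0_eq_abs, abs_of_nonneg hr.1]; exact hr.2.trans_lt hhδ)
  rw [add_sub_cancel_left, minner_smul_right, mnorm_smul, abs_of_pos hh] at hsup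
  exact le_of_mul_le_mul_left (by linarith) hh

/-- The choice of the direction `-p` realizes the Legendre transform of the Lagrangian. -/
theorem IsDominated.mnorm_sq_div_two_le_U (hm : ∀ i, 0 < m i) (hv : IsDominated m v)
    (hx : inOmega m x) (hpX : inX m p) (hp : InSuperdiff m v x p) :
    mnorm m p ^ 2 / 2 ≤ U m x := by
  have h := hv.neg_minner_le_of_inSuperdiff hm hx (by simpa using hpX.smul (-1)) hp (z := -p)
  have hneg : minner m p (-p) = -minner m p p := by simpa using minner_smul_right (-1) p p
  rw [minner_neg_neg, hneg] at h
  rw [mnorm_sq hm]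
  linarith

theorem IsFiniteActionArc.integral_lagrangian (hc : IsFiniteActionArc m c c' s t) :
    ∫ r in s..t, lagrangian m c c' r =
      (∫ r in s..t, minner m (c' r) (c' r)) / 2 + ∫ r in s..t, U m (c r) := by
  have hst := hc.isPrimitiveOn.le
  rw [← intervalIntegral.integral_div, ← intervalIntegral.integral_add
    (((intervalIntegrable_iff_integrableOn_Ioc_of_le hst).2 hc.integrableOn_sq).div_const 2)
    ((intervalIntegrable_iff_integrableOn_Ioc_of_le hst).2 hc.integrableOn_U)]
  rfl

theorem IsSobolevArc.minner_sub_self_le (hm : ∀ i, 0 < m i) (hc : IsSobolevArc m c c' s t)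
    {r : ℝ} (hr : r ∈ Icc s t) : minner m (c r - c s) (c r - c s) ≤
      (t - s) * ∫ r in s..t, minner m (c' r) (c' r) := by
  have hi := (intervalIntegrable_iff_integrableOn_Ioc_of_le hc.isPrimitiveOn.le).2
    hc.integrableOn_sq
  have hnonneg : ∀ r, 0 ≤ minner m (c' r) (c' r) := fun r => minner_self_nonneg hm _
  have hir := hi.mono_set (uIcc_subset_uIcc_left (Icc_subset_uIcc hr))
  refine ((hc.isPrimitiveOn.mono le_rfl hr.1 hr.2).minner_sub_self_le hm hir).trans ?_
  gcongr
  · exact intervalIntegral.integral_nonneg hr.1 fun r _ => hnonneg r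
  · exact sub_nonneg.2 hc.isPrimitiveOn.le
  · exact hr.2
  · exact intervalIntegral.integral_mono_interval le_rfl hr.1 hr.2
      (ae_of_all _ hnonneg) hi

theorem IsFiniteActionArc.potential_le_of_action_le (hm : ∀ i, 0 < m i)
    (hc : IsFiniteActionArc m c c' 1 (1 + h)) (hh : 0 < h)
    (hU : ∀ r ∈ Icc 1 (1 + h), C ≤ U m (c r))
    (haction : ∫ r in (1 : ℝ)..(1 + h), lagrangian m c c' r ≤
      a * mnorm m (c (1 + h) - c 1) + ε * h) : C ≤ a ^ 2 / 2 + ε := by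
  have h1 := hc.isPrimitiveOn.le
  set E := ∫ r in (1 : ℝ)..(1 + h), minner m (c' r) (c' r)
  set n := mnorm m (c (1 + h) - c 1)
  have hn : n ^ 2 ≤ h * E := by
    simpa [n, mnorm_sq hm] using hc.toIsSobolevArc.minner_sub_self_le hm (right_mem_Icc.2 h1)
  have hpot := intervalIntegral.integral_mono_on h1 intervalIntegrable_const
    ((intervalIntegrable_iff_integrableOn_Ioc_of_le h1).2 hc.integrableOn_U) hU
  rw [intervalIntegral.integral_const, smul_eq_mul, add_sub_cancel_left] at hpot
  rw [hc.integral_lagrangian] at haction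
  have hscaled : h * (E / 2 + h * C) ≤ h * (a * n + ε * h) :=
    mul_le_mul_of_nonneg_left (by linarith) hh.le
  refine le_of_mul_le_mul_left (?_ : h ^ 2 * C ≤ h ^ 2 * _) (by positivity)
  linarith [sq_nonneg (n - a * h)]

theorem IsFiniteActionArc.kinetic_le_of_calibrated (hm : ∀ i, 0 < m i)
    (hc : IsFiniteActionArc m c c' 1 (1 + h)) (hC : 0 ≤ C) (hhC : 8 * h * C ≤ 1)
    (hbdd : ∀ y, inX m y → -(C * (1 + minner m (y - z) (y - z))) ≤ v y)
    (hcal : (∫ r in (1 : ℝ)..(1 + h), lagrangian m c c' r) + v (c (1 + h)) ≤ v (c 1) + ε) :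
    ∫ r in (1 : ℝ)..(1 + h), minner m (c' r) (c' r) ≤
      4 * (v (c 1) + ε + C * (1 + 2 * minner m (c 1 - z) (c 1 - z))) := by
  have h1 := hc.isPrimitiveOn.le
  set E := ∫ r in (1 : ℝ)..(1 + h), minner m (c' r) (c' r)
  have hE : 0 ≤ E := intervalIntegral.integral_nonneg h1 fun r _ => minner_self_nonneg hm _
  have hpot : 0 ≤ ∫ r in (1 : ℝ)..(1 + h), U m (c r) :=
    intervalIntegral.integral_nonneg h1 fun r _ => U_nonneg hm _
  have hdisp := hc.toIsSobolevArc.minner_sub_self_le hm (right_mem_Icc.2 h1)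
  have htri := minner_add_self_le hm (c (1 + h) - c 1) (c 1 - z)
  rw [sub_add_sub_cancel] at htri
  have hend := hbdd _ (hc.mem _ (right_mem_Icc.2 h1))
  rw [hc.integral_lagrangian] at hcal
  have hdist : C * minner m (c (1 + h) - z) (c (1 + h) - z) ≤
      C * (2 * ((1 + h - 1) * E + minner m (c 1 - z) (c 1 - z))) :=
    mul_le_mul_of_nonneg_left (by linarith) hC
  have habsorb : 8 * h * C * E ≤ 1 * E := mul_le_mul_of_nonneg_right hhC hE
  linarith

theorem exists_pos_forall_minner_lt_mem (hm : ∀ i, 0 < m i) {W : Set (Conf d N)}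
    (hW : W ∈ 𝓝 x) : ∃ ρ > 0, ∀ y, minner m (y - x) (y - x) < ρ → y ∈ W := by
  obtain ⟨r, hr, hball⟩ := Metric.mem_nhds_iff.1 hW
  obtain ⟨k, hk, hnorm⟩ := exists_norm_sq_le_mul_minner (d := d) hm
  refine ⟨r ^ 2 / k, by positivity, fun y hy => hball ?_⟩
  rw [lt_div_iff₀ hk, mul_comm] at hy
  rw [mem_ball_iff_norm]
  exact lt_of_pow_lt_pow_left₀ 2 hr.le ((hnorm _).trans_lt hy)

/-- Short arcs along which `v` is almost calibrated stay close to their origin. -/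
theorem eventually_forall_calibrated_mem (hm : ∀ i, 0 < m i) (hC : 0 ≤ C)
    (hbdd : ∀ y, inX m y → -(C * (1 + minner m (y - z) (y - z))) ≤ v y)
    {W : Set (Conf d N)} (hW : W ∈ 𝓝 x) :
    ∀ᶠ h in 𝓝[>] (0 : ℝ), ∀ c c', IsFiniteActionArc m c c' 1 (1 + h) → c 1 = x →
      (∫ r in (1 : ℝ)..(1 + h), lagrangian m c c' r) + v (c (1 + h)) ≤ v x + ε →
      ∀ r ∈ Icc 1 (1 + h), c r ∈ W := by
  obtain ⟨ρ, hρ, hmem⟩ := exists_pos_forall_minner_lt_mem hm hW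
  set M := 4 * (v x + ε + C * (1 + 2 * minner m (x - z) (x - z)))
  have hsmall : ∀ k η : ℝ, 0 < η → ∀ᶠ h in 𝓝[>] (0 : ℝ), h * k < η := fun k η hη =>
    ((by fun_prop : Continuous fun h : ℝ => h * k).tendsto' 0 0 (zero_mul k)).mono_left
      nhdsWithin_le_nhds |>.eventually_lt_const hη
  filter_upwards [hsmall (8 * C) 1 one_pos, hsmall M ρ hρ, self_mem_nhdsWithin]
    with h hhC hhM hh c c' hc hcx hcal r hr
  have hE := hc.kinetic_le_of_calibrated hm hC (by linarith) hbdd (hcx ▸ hcal)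
  have hdisp := hc.toIsSobolevArc.minner_sub_self_le hm hr
  rw [hcx, add_sub_cancel_left] at hdisp
  rw [hcx] at hE
  exact hmem _ ((hdisp.trans (mul_le_mul_of_nonneg_left hE (le_of_lt hh))).trans_lt hhM)

/-- The functions almost calibrated at `x`: from `x` start arcs of arbitrary duration along which
the domination inequality is an equality up to an arbitrarily small error. -/
def IsAlmostCalibratedAt (m : Fin N → ℝ) (v : Conf d N → ℝ) (x : Conf d N) : Prop :=
  ∀ h > 0, ∀ ε > 0, ∃ c c', IsFiniteActionArc m c c' 1 (1 + h) ∧ c 1 = x ∧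
    (∫ t in (1 : ℝ)..(1 + h), lagrangian m c c' t) + v (c (1 + h)) ≤ v x + ε

theorem InSubdiff.sub_le (hm : ∀ i, 0 < m i) (hp : InSubdiff m v x p) (hε : 0 < ε) :
    ∀ᶠ y in 𝓝 x, inX m y → v x - v y ≤ (mnorm m p + ε) * mnorm m (y - x) := by
  filter_upwards [eventually_nhdsWithin_iff.1 (hp ε hε)] with y hy hyX
  rcases eq_or_ne y x with rfl | hne
  · simpa using mul_nonneg (add_nonneg (mnorm_nonneg p) hε.le) (mnorm_nonneg (y - y))
  · linarith [hy ⟨hyX, hne⟩, neg_abs_le (minner m p (y - x)),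
      abs_minner_le_mnorm_mul_mnorm hm p (y - x)]

theorem IsAlmostCalibratedAt.U_le_mnorm_sq_div_two (hm : ∀ i, 0 < m i)
    (hv : IsAlmostCalibratedAt m v x) (hC : 0 ≤ C)
    (hbdd : ∀ y, inX m y → -(C * (1 + minner m (y - z) (y - z))) ≤ v y)
    (hx : ¬ collision x) (hp : InSubdiff m v x p) : U m x ≤ mnorm m p ^ 2 / 2 := by
  suffices ∀ ε > 0, U m x ≤ (mnorm m p + ε) ^ 2 / 2 + ε + ε by
    simpa using le_of_forall_pos_le_of_continuousAt (by fun_prop) this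
  intro ε hε
  have hW := (hp.sub_le hm hε).and
    ((continuousAt_U hx).eventually_const_le (sub_lt_self (U m x) hε))
  obtain ⟨h, hstay, hh, hh1⟩ := ((eventually_forall_calibrated_mem (ε := ε) hm hC hbdd hW).and
    (Ioo_mem_nhdsGT one_pos)).exists
  obtain ⟨c, c', hc, hcx, hcal⟩ := hv h hh (ε * h) (by positivity)
  have hmem := hstay c c' hc hcx (hcal.trans (by nlinarith))
  have hend := right_mem_Icc.2 hc.isPrimitiveOn.le
  have hslope := (hmem _ hend).1 (hc.mem _ hend)
  have := hc.potential_le_of_action_le hm hh (fun r hr => (hmem r hr).2)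
    (a := mnorm m p + ε) (ε := ε) (by rw [hcx]; linarith)
  linarith

end Viscosity

/-! ### The value function -/

section ValueFunction

variable {m : Fin N → ℝ} {b x : Conf d N} {φ φ' γ γ' : ℝ → Conf d N} {r ε : ℝ}

theorem timeSet_top (t₀ : ℝ) : timeSet t₀ ⊤ = Ioi t₀ := by
  ext t
  simp [timeSet, EReal.coe_lt_top]

theorem inD_top_iff (hm : ∀ i, 0 < m i) : InD m 1 ⊤ φ φ' ↔
    φ 1 = 0 ∧ (∀ t ≥ 1, inX m (φ t)) ∧ (∀ T ≥ 1, IsPrimitiveOn φ φ' 1 T) ∧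
      IntegrableOn (fun t => minner m (φ' t) (φ' t)) (Ioi 1) := by
  simp only [InD, EReal.coe_lt_top, true_imp_iff, timeSet_top, mnorm_sq hm]
  constructor
  · rintro ⟨h0, hX, hint, hi, hsq⟩
    refine ⟨h0, hX, fun T hT => ⟨hT, (intervalIntegrable_iff_integrableOn_Ioc_of_le hT).2 (hi T hT),
      fun t ht => ?_⟩, hsq⟩
    rw [h0, zero_add, intervalIntegral.integral_of_le ht.1, ← hint t ht.1]
  · rintro ⟨h0, hX, hprim, hsq⟩
    refine ⟨h0, hX, fun t ht => ?_, fun t ht => (intervalIntegrable_iff_integrableOn_Ioc_of_le ht).1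
      (hprim t ht).intervalIntegrable, hsq⟩
    rw [← intervalIntegral.integral_of_le ht, (hprim t ht).integral_eq_sub, h0, sub_zero]

theorem deviation_parCurve (hφ : φ 1 = 0) : deviation m b (parCurve m b x φ) = φ := by
  funext t
  simp only [deviation, parCurve, hφ, parR0_one]
  abel

theorem parCurve_one (hφ : φ 1 = 0) : parCurve m b x φ 1 = x := by
  simp [parCurve, hφ, parR0_one]

theorem IsParabolicCurve.inD_deviation (hm : ∀ i, 0 < m i) (hb : inX m b)
    (hγ : IsParabolicCurve m b γ γ') :
    InD m 1 ⊤ (deviation m b γ) (deviationVel m b γ') :=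
  (inD_top_iff hm).2 ⟨deviation_one,
    fun t ht => ((hγ.mem t ht).sub (hb.smul _)).sub ((hγ.mem 1 le_rfl).sub (hb.smul _)),
    fun T hT => isPrimitiveOn_deviation (hγ.isPrimitiveOn T hT), hγ.integrableOn_sq⟩

theorem isParabolicCurve_parCurve (hm : ∀ i, 0 < m i) (hb : inX m b) (hx : inX m x)
    (hφ : InD m 1 ⊤ φ φ') :
    IsParabolicCurve m b (parCurve m b x φ) (fun t => φ' t + refSpeed m b t • b) := by
  obtain ⟨-, hX, hprim, hsq⟩ := (inD_top_iff hm).1 hφ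
  refine ⟨fun t ht => (((hX t ht).add (hb.smul _)).add hx).sub (hb.smul _), fun T hT => ?_, by
    simpa only [deviationVel, add_sub_cancel_right] using hsq⟩
  refine (((hprim T hT).add (isPrimitiveOn_parR0 hT)).sub_const (beta m b • b - x)).congr
    (fun t _ => ?_) fun t _ => rfl
  simp only [parCurve]
  abel

theorem IsAdmissibleCurve.parInf_le (hm : ∀ i, 0 < m i) (hb : inX m b)
    (hγ : IsAdmissibleCurve m b γ γ') : parInf m b (γ 1) ⊤ ≤ renAction m b γ γ' := by
  refine (iInf_le _ _).trans ((iInf_le _ _).trans ((iInf_le _ (hγ.inD_deviation hm hb)).trans ?_))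
  rw [parAction, timeSet_top, parCurve_deviation,
    if_pos ⟨hγ.integrableOn_renLagrangian, hγ.ae_not_collision⟩]
  rfl

theorem exists_isAdmissibleCurve_renAction_lt (hm : ∀ i, 0 < m i) (hb : inX m b)
    (hx : inX m x) (h : parInf m b x ⊤ < r) :
    ∃ γ γ', γ 1 = x ∧ IsAdmissibleCurve m b γ γ' ∧ renAction m b γ γ' < r := by
  simp only [parInf, iInf_lt_iff] at h
  obtain ⟨φ, φ', hφ, hlt⟩ := h
  have hvel : deviationVel m b (fun t => φ' t + refSpeed m b t • b) = φ' := by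
    simp [funext_iff, deviationVel]
  have hren : renLagrangian m b (parCurve m b x φ) (fun t => φ' t + refSpeed m b t • b) =
      parIntegrand m b x φ φ' := by
    rw [renLagrangian, deviation_parCurve hφ.1, parCurve_one hφ.1, hvel]
  rw [parAction, timeSet_top] at hlt
  split_ifs at hlt with hfin
  · refine ⟨_, _, parCurve_one hφ.1,
      ⟨isParabolicCurve_parCurve hm hb hx hφ, hren ▸ hfin.1, hfin.2⟩, ?_⟩
    rw [renAction, hren]
    exact EReal.coe_lt_coe_iff.1 hlt
  · exact absurd hlt not_top_lt

theorem le_parInf (hm : ∀ i, 0 < m i) (hb : IsMinCentral m b) (hx : inX m x) :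
    ((-((1 + beta m b) * (1 + minner m (x - beta m b • b) (x - beta m b • b))) : ℝ) : EReal) ≤
      parInf m b x ⊤ := by
  by_contra! hlt
  obtain ⟨γ, γ', rfl, hγ, hlt⟩ := exists_isAdmissibleCurve_renAction_lt hm hb.1 hx hlt
  exact hlt.not_ge (hγ.le_renAction hm hb)

/-- A configuration from which no motion of finite action starts has the value `⊤.toReal = 0`. -/
theorem le_parValue (hm : ∀ i, 0 < m i) (hb : IsMinCentral m b) (hx : inX m x) :
    -((1 + beta m b) * (1 + minner m (x - beta m b • b) (x - beta m b • b))) ≤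
      parValue m b x := by
  rcases eq_or_ne (parInf m b x ⊤) ⊤ with htop | htop
  · have hβ := beta_pos (hb.U_pos hm)
    have hdist := minner_self_nonneg hm (x - beta m b • b)
    rw [parValue, htop, EReal.toReal_top, neg_nonpos]
    positivity
  · exact EReal.toReal_le_toReal (le_parInf hm hb hx) (EReal.coe_ne_bot _) htop

theorem IsAdmissibleCurve.coe_parValue (hm : ∀ i, 0 < m i) (hb : IsMinCentral m b)
    (hγ : IsAdmissibleCurve m b γ γ') : (parValue m b (γ 1) : EReal) = parInf m b (γ 1) ⊤ :=
  EReal.coe_toReal ((hγ.parInf_le hm hb.1).trans_lt (EReal.coe_lt_top _)).ne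
    ((EReal.bot_lt_coe _).trans_le (le_parInf hm hb (hγ.mem 1 le_rfl))).ne'

theorem IsAdmissibleCurve.parValue_le (hm : ∀ i, 0 < m i) (hb : IsMinCentral m b)
    (hγ : IsAdmissibleCurve m b γ γ') : parValue m b (γ 1) ≤ renAction m b γ γ' := by
  rw [← EReal.coe_le_coe_iff, hγ.coe_parValue hm hb]
  exact hγ.parInf_le hm hb.1

theorem exists_renAction_lt_parValue_add (hm : ∀ i, 0 < m i) (hb : IsMinCentral m b)
    (hx : inOmega m x) (hε : 0 < ε) :
    ∃ γ γ', γ 1 = x ∧ IsAdmissibleCurve m b γ γ' ∧ renAction m b γ γ' < parValue m b x + ε := by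
  obtain ⟨γ, γ', rfl, hγ⟩ := exists_isAdmissibleCurve hm hb hx
  refine exists_isAdmissibleCurve_renAction_lt hm hb.1 hx.1 ?_
  rw [← hγ.coe_parValue hm hb, EReal.coe_lt_coe_iff]
  exact lt_add_of_pos_right _ hε

theorem isDominated_parValue (hm : ∀ i, 0 < m i) (hb : IsMinCentral m b) :
    IsDominated m (parValue m b) := fun c c' h hc hend => by
  refine le_of_forall_pos_le_add fun ε hε => ?_
  obtain ⟨γ, γ', hcγ, hγ, hlt⟩ := exists_renAction_lt_parValue_add hm hb hend hε
  have hle := (hc.isAdmissibleCurve_concatenate hm hb hγ hcγ.symm).parValue_le hm hb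
  rw [hc.renAction_concatenate hm hb hγ hcγ.symm, eqOn_concatenate hc.isPrimitiveOn.le] at hle
  linarith

theorem isAlmostCalibratedAt_parValue (hm : ∀ i, 0 < m i) (hb : IsMinCentral m b)
    (hx : inOmega m x) : IsAlmostCalibratedAt m (parValue m b) x := fun h hh ε hε => by
  obtain ⟨γ, γ', hγx, hγ, hlt⟩ := exists_renAction_lt_parValue_add hm hb hx hε
  obtain ⟨harc, htail⟩ := (isAdmissibleCurve_iff_timeShift hm hb hh.le).1 hγ
  have hle := htail.parValue_le hm hb
  rw [hγ.renAction_eq_add_timeShift hm hb hh.le] at hlt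
  exact ⟨γ, γ', harc, hγx, by simp only [timeShift] at hle; linarith⟩

end ValueFunction

theorem value_function_viscosity_parabolic_general {m : Fin N → ℝ} (hm : ∀ i, 0 < m i)
    {bm : Conf d N} (hbm : IsMinCentral m bm) {x : Conf d N} (hx : inOmega m x) :
    (∀ p : Conf d N, inX m p → InSuperdiff m (parValue m bm) x p →
      (mnorm m p) ^ 2 / 2 - U m x ≤ 0) ∧
    (∀ p : Conf d N, InSubdiff m (parValue m bm) x p →
      0 ≤ (mnorm m p) ^ 2 / 2 - U m x) := by
  have hβ : 0 ≤ 1 + beta m bm := by linarith [beta_pos (hbm.U_pos hm)]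
  refine ⟨fun p hpX hp => sub_nonpos.2 ?_, fun p hp => sub_nonneg.2 ?_⟩
  · exact (isDominated_parValue hm hbm).mnorm_sq_div_two_le_U hm hx hpX hp
  · exact (isAlmostCalibratedAt_parValue hm hbm hx).U_le_mnorm_sq_div_two hm hβ
      (fun y hy => le_parValue hm hbm hy) hx.2 hp

/-- **Hamilton–Jacobi theorem, parabolic case** : the renormalized value function
`v(x) = min_φ A_x(φ)` is a viscosity solution on `Ω` of `½‖∇v‖_M² − U = 0` : for every
`x ∈ Ω`, `½‖p‖_M² − U(x) ≤ 0` for all `p ∈ D⁺v(x)` and `½‖p‖_M² − U(x) ≥ 0` for all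
`p ∈ D⁻v(x)`. -/
theorem value_function_viscosity_parabolic {d N : ℕ} (hd : 2 ≤ d) (hN : 2 ≤ N)
    (m : Fin N → ℝ) (hm : ∀ i, 0 < m i)
    (bm : Conf d N) (hbm : IsMinCentral m bm)
    (x : Conf d N) (hx : inOmega m x) :
    (∀ p : Conf d N, inX m p → InSuperdiff m (parValue m bm) x p →
      (mnorm m p) ^ 2 / 2 - U m x ≤ 0) ∧
    (∀ p : Conf d N, inX m p → InSubdiff m (parValue m bm) x p →
      0 ≤ (mnorm m p) ^ 2 / 2 - U m x) :=
  have h := value_function_viscosity_parabolic_general hm hbm hx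
  ⟨h.1, fun p _ => h.2 p⟩

end NBodyHJ
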